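/- arXiv:1703.06673 — 3 statements merged into one kernel-verified Lean document; each statement's English description precedes it below -/
import Mathlib

section
/- For every ε > 0 there exists p₀ such that for every prime p ≥ p₀ there exist ω(p-1) integers x₁, ..., x_{ω(p-1)} with 1 ≤ x_i ≤ p^{1/(4√e)+ε} for each i, such that the images of x₁, ..., x_{ω(p-1)} in the unit group (ZMod p)ˣ generate (ZMod p)ˣ (i.e., the subgroup closure of their images is the whole group). -/
section

open Polynomial

namespace SG

/-- If all iterates of `f * d/dX` kill `R` at `α` then `(X-α)^M ∣ R`. -/
lemma dvd_of_delta {p : ℕ} [Fact p.Prime] (f : (ZMod p)[X]) (α : ZMod p) (hf : f.eval α ≠ 0)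
    (M : ℕ) : ∀ (R : (ZMod p)[X]), M ≤ p →
    (∀ l < M, ((fun P => f * derivative P)^[l] R).eval α = 0) → (X - C α) ^ M ∣ R := by
  induction M with
  | zero => intro R _ _; simp
  | succ M ih =>
    intro R hM h
    have h1 := ih R (by omega) (fun l hl => h l (by omega))
    have h2 := ih (f * derivative R) (by omega) (fun l hl => by
      have := h (l+1) (by omega)
      simpa [Function.iterate_succ_apply] using this)
    rcases Nat.eq_zero_or_pos M with h0 | h0
    · subst h0
      have := h 0 (by omega)
      simp only [Function.iterate_zero, id] at this
      simpa using dvd_iff_isRoot.mpr this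
    have hcop : IsCoprime ((X - C α) ^ M) f := by
      apply IsCoprime.pow_left
      apply (Polynomial.irreducible_X_sub_C α).coprime_iff_not_dvd.mpr
      intro hd
      exact hf (dvd_iff_isRoot.mp hd)
    have h3 := hcop.dvd_of_dvd_mul_left h2
    obtain ⟨S, rfl⟩ := h1
    have h4 : derivative ((X - C α) ^ M * S) =
      (X - C α)^(M-1) * (C (M : ZMod p) * S) + (X - C α)^M * derivative S := by
      simp [derivative_mul, derivative_X_sub_C_pow]; ring
    rw [h4] at h3
    have h5 := (dvd_add_left (dvd_mul_right _ _)).mp h3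
    obtain ⟨N, rfl⟩ : ∃ N, M = N + 1 := ⟨M-1, by omega⟩
    have h6 : (X - C α) ∣ C ((N+1 : ℕ) : ZMod p) * S := by
      rw [Nat.add_sub_cancel, pow_succ] at h5
      exact (mul_dvd_mul_iff_left (pow_ne_zero _ (X_sub_C_ne_zero α))).mp h5
    have h7 : IsRoot S α := by
      have := dvd_iff_isRoot.mp h6
      rw [IsRoot, eval_mul, eval_C] at this
      refine (mul_eq_zero.mp this).resolve_left ?_
      intro hz
      have hd := (ZMod.natCast_eq_zero_iff _ _).mp hz
      have := Nat.le_of_dvd (by omega) hd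
      omega
    have h8 := dvd_iff_isRoot.mpr h7
    rw [pow_succ]
    exact mul_dvd_mul_left _ h8

lemma sum_ne_zero_of_trailing {F ι : Type*} [Field F] (s : Finset ι) (P : ι → F[X])
    (hne : ∃ i ∈ s, P i ≠ 0)
    (hinj : ∀ i ∈ s, ∀ j ∈ s, P i ≠ 0 → P j ≠ 0 →
      (P i).natTrailingDegree = (P j).natTrailingDegree → i = j) :
    ∑ i ∈ s, P i ≠ 0 := by
  classical
  obtain ⟨i0, hi0, hP0⟩ := hne
  obtain ⟨i, hi, hmin⟩ := Finset.exists_min_image (s.filter (fun i => P i ≠ 0))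
    (fun i => (P i).natTrailingDegree) ⟨i0, by simp [hi0, hP0]⟩
  simp only [Finset.mem_filter] at hi hmin
  intro h
  have hc := congrArg (fun Q => Q.coeff (P i).natTrailingDegree) h
  simp only [finsetSum_coeff, coeff_zero] at hc
  rw [Finset.sum_eq_single i] at hc
  · exact hi.2 (Polynomial.trailingCoeff_eq_zero.mp hc)
  · intro j hj hji
    by_cases hPj : P j = 0
    · simp [hPj]
    apply coeff_eq_zero_of_lt_natTrailingDegree
    have := hmin j ⟨hj, hPj⟩
    rcases this.lt_or_eq with h1 | h1
    · exact h1
    · exact absurd (hinj i hi.1 j hj hi.2 hPj h1).symm hji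
  · intro h; exact absurd hi.1 h

/-- The twisted derivation. -/
noncomputable def T {F : Type*} [Field F] (f : F[X]) (n : ℕ) : F[X] →ₗ[F] F[X] :=
  (LinearMap.mulLeft F f) ∘ₗ derivative + LinearMap.mulLeft F (C (n : F) * derivative f)

lemma T_apply {F : Type*} [Field F] (f : F[X]) (n : ℕ) (k : F[X]) :
    T f n k = f * derivative k + C (n : F) * derivative f * k := by
  simp [T, mul_assoc]

lemma T_natDegree {F : Type*} [Field F] (f : F[X]) (n : ℕ) (k : F[X]) :
    (T f n k).natDegree ≤ k.natDegree + f.natDegree := by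
  rw [T_apply]
  apply (natDegree_add_le _ _).trans
  apply max_le
  · apply natDegree_mul_le.trans
    have := natDegree_derivative_le k
    omega
  · apply natDegree_mul_le.trans
    have := natDegree_C_mul_le (n : F) (derivative f)
    have := natDegree_derivative_le f
    omega

lemma T_iter_natDegree {F : Type*} [Field F] (f : F[X]) (n : ℕ) (l : ℕ) (k : F[X]) :
    (((T f n) ^ l) k).natDegree ≤ k.natDegree + l * f.natDegree := by
  induction l with
  | zero => simp
  | succ l ih =>
    rw [pow_succ', Module.End.mul_apply]
    have := T_natDegree f n ((T f n ^ l) k)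
    rw [add_mul]; omega

lemma delta_term {p : ℕ} [Fact p.Prime] (f : (ZMod p)[X]) (n j : ℕ) (k : (ZMod p)[X]) :
    f * derivative (k * f ^ n * X ^ (p * j)) = T f n k * f ^ n * X ^ (p * j) := by
  rw [T_apply, derivative_mul, derivative_mul, derivative_X_pow, derivative_pow]
  have : ((p * j : ℕ) : ZMod p) = 0 := by simp
  rw [this]
  rcases n with _ | n
  · simp; ring
  · simp [pow_succ]; ring

lemma delta_sum {p : ℕ} [Fact p.Prime] {ι : Type*} (s : Finset ι) (f : (ZMod p)[X])
    (n j : ι → ℕ) (k : ι → (ZMod p)[X]) (l : ℕ) :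
    ((fun P => f * derivative P)^[l] (∑ i ∈ s, k i * f ^ (n i) * X ^ (p * j i))) =
    ∑ i ∈ s, ((T f (n i)) ^ l) (k i) * f ^ (n i) * X ^ (p * j i) := by
  induction l with
  | zero => simp
  | succ l ih =>
    rw [Function.iterate_succ_apply', ih, derivative_sum, Finset.mul_sum]
    apply Finset.sum_congr rfl
    intro i _
    rw [delta_term, pow_succ', Module.End.mul_apply]

/-- Existence of the auxiliary coefficients by linear algebra. -/
lemma exists_aux {p : ℕ} [Fact p.Prime] (f : (ZMod p)[X]) (m : ℕ) (hm : f.natDegree ≤ m)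
    (a : ZMod p) (g q J K M : ℕ) (hK : 0 < K)
    (hcount : M * (K + M * m + J) < q * J * K) :
    ∃ k : Fin q × Fin J → (ZMod p)[X], (∃ i, k i ≠ 0) ∧ (∀ i, (k i).natDegree < K) ∧
      ∀ l < M, ∑ i, ((T f (g * i.1)) ^ l) (k i) * C (a ^ (i.1 : ℕ)) * X ^ (i.2 : ℕ) = 0 := by
  classical
  let D := K + M * m + J
  let P : ℕ → ((Fin q × Fin J → degreeLT (ZMod p) K) →ₗ[ZMod p] (ZMod p)[X]) := fun l =>
    ∑ i : Fin q × Fin J, (LinearMap.mulRight (ZMod p) (C (a ^ (i.1 : ℕ)) * X ^ (i.2 : ℕ))) ∘ₗ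
      ((T f (g * i.1)) ^ l) ∘ₗ (degreeLT (ZMod p) K).subtype ∘ₗ LinearMap.proj i
  let L : (Fin q × Fin J → degreeLT (ZMod p) K) →ₗ[ZMod p] (Fin M × Fin D → ZMod p) :=
    LinearMap.pi (fun ld => (lcoeff (ZMod p) (ld.2 : ℕ)) ∘ₗ P ld.1)
  have hfr : Module.finrank (ZMod p) (Fin M × Fin D → ZMod p) <
      Module.finrank (ZMod p) (Fin q × Fin J → degreeLT (ZMod p) K) := by
    rw [Module.finrank_fintype_fun_eq_card, Module.finrank_pi_fintype]
    have : Module.finrank (ZMod p) (degreeLT (ZMod p) K) = K := by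
      rw [(degreeLTEquiv (ZMod p) K).finrank_eq]; simp
    simp [this]
    exact hcount
  have : FiniteDimensional (ZMod p) (degreeLT (ZMod p) K) :=
    Module.Finite.equiv (degreeLTEquiv (ZMod p) K).symm
  have hker := LinearMap.ker_ne_bot_of_finrank_lt (f := L) hfr
  obtain ⟨v, hv, hv0⟩ := (Submodule.ne_bot_iff _).mp hker
  have hdeg : ∀ i, ((v i : (ZMod p)[X])).natDegree < K := by
    intro i
    by_cases h0 : (v i : (ZMod p)[X]) = 0
    · rw [h0]; simpa using hK
    · rw [natDegree_lt_iff_degree_lt h0]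
      exact mem_degreeLT.mp (v i).2
  refine ⟨fun i => (v i : (ZMod p)[X]), ?_, hdeg, ?_⟩
  · by_contra! h
    exact hv0 (funext fun i => Subtype.ext (h i))
  · intro l hl
    have hP : P l v = ∑ i, ((T f (g * i.1)) ^ l) (v i : (ZMod p)[X]) * C (a ^ (i.1 : ℕ)) * X ^ (i.2 : ℕ) := by
      simp [P, mul_assoc]
    rw [← hP]
    have hPd : (P l v).natDegree < D := by
      rw [hP]
      apply lt_of_le_of_lt (natDegree_sum_le_of_forall_le (n := D - 1) _ _ _) (by dsimp only [D]; omega)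
      intro i _
      apply natDegree_mul_le.trans
      have h1 := natDegree_mul_C_le ((T f (g * i.1) ^ l) (v i : (ZMod p)[X])) (a ^ (i.1 : ℕ))
      have h2 := T_iter_natDegree f (g * i.1) l (v i : (ZMod p)[X])
      have h3 := hdeg i
      have h4 : l * f.natDegree ≤ M * m := Nat.mul_le_mul hl.le hm
      have h5 := i.2.2
      simp only [natDegree_X_pow]
      dsimp only [D]; omega
    ext d
    rw [coeff_zero]
    by_cases hd : d < D
    · have := congrFun (LinearMap.mem_ker.mp hv) (⟨l, hl⟩, ⟨d, hd⟩)
      simpa [L] using this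
    · exact coeff_eq_zero_of_natDegree_lt (by omega)


lemma window_inj {p q g e K : ℕ} (hq : q.Prime) (hg : q * g + 1 = p) (he0 : 0 < e) (heq : e < q)
    (hK : q * K + q * q ≤ p) {i i' j j' t t' : ℕ} (hi : i < q) (hi' : i' < q)
    (ht : t < K) (ht' : t' < K)
    (h : t + g * i * e + p * j = t' + g * i' * e + p * j') : i = i' ∧ j = j' := by
  have hgz : (q : ℤ) * g = p - 1 := by have : ((q * g + 1 : ℕ) : ℤ) = p := by rw [hg]
                                       push_cast at this; linarith
  have hz : (t : ℤ) + g * i * e + p * j = t' + g * i' * e + p * j' := by exact_mod_cast h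
  set u : ℤ := e * (i - i') + q * (j - j') with hu
  have hpu : (p : ℤ) * u = e * (i - i') - q * (t - t') := by
    rw [hu]
    have : (q : ℤ) * (t + g * i * e + p * j) = q * (t' + g * i' * e + p * j') := by rw [hz]
    have e1 : (q : ℤ) * (t + g * i * e + p * j) = q * t + (q * g) * i * e + p * q * j := by ring
    have e2 : (q : ℤ) * (t' + g * i' * e + p * j') = q * t' + (q * g) * i' * e + p * q * j' := by ring
    rw [e1, e2, hgz] at this
    linarith
  have hKz : (q : ℤ) * K + q * q ≤ p := by exact_mod_cast hK
  have b1 : |(i : ℤ) - i'| ≤ q := by rw [abs_le]; constructor <;> omega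
  have b2 : |(t : ℤ) - t'| ≤ K - 1 := by rw [abs_le]; constructor <;> omega
  have b3 : |(e : ℤ) * (i - i')| ≤ q * q := by
    rw [abs_mul, Nat.abs_cast]
    exact mul_le_mul (by exact_mod_cast heq.le) b1 (abs_nonneg _) (by positivity)
  have b4 : |(q : ℤ) * (t - t')| ≤ q * (K - 1) := by
    rw [abs_mul, Nat.abs_cast]
    exact mul_le_mul_of_nonneg_left b2 (by positivity)
  have hqpos : (0 : ℤ) < q := by exact_mod_cast hq.pos
  have hppos : (0 : ℤ) < p := by omega
  have b5 : |(p : ℤ) * u| < p := by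
    rw [hpu]
    apply (abs_sub _ _).trans_lt
    nlinarith
  have hu0 : u = 0 := by
    rw [abs_mul, Nat.abs_cast] at b5
    have : |u| < 1 := by nlinarith [abs_nonneg u]
    exact Int.abs_lt_one_iff.mp this
  have hdvd : (q : ℤ) ∣ e * (i - i') := ⟨-(j - j'), by linarith⟩
  have hqz : Prime (q : ℤ) := Nat.prime_iff_prime_int.mp hq
  have hii : (i : ℤ) - i' = 0 := by
    rcases hqz.dvd_or_dvd hdvd with h1 | h1
    · have := Nat.le_of_dvd he0 (by exact_mod_cast h1)
      omega
    · apply Int.eq_zero_of_abs_lt_dvd h1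
      rw [abs_lt]; constructor <;> omega
  have hii' : i = i' := by omega
  refine ⟨hii', ?_⟩
  rw [hii, mul_zero, zero_add] at hu
  rw [hu0] at hu
  rcases mul_eq_zero.mp hu.symm with h1 | h1
  · omega
  · omega

lemma stepanov_count {p q g e m : ℕ} [Fact p.Prime] (hq : q.Prime) (hg : q * g + 1 = p)
    (he0 : 0 < e) (heq : e < q) (G : (ZMod p)[X]) (hG : G.coeff 0 ≠ 0)
    (hm : (X ^ e * G).natDegree ≤ m) (hsize : 4 * (m + 3) ^ 2 * q ^ 2 ≤ p) (a : ZMod p)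
    (S : Finset (ZMod p))
    (hS : ∀ x ∈ S, (X ^ e * G).eval x ≠ 0 ∧ ((X ^ e * G).eval x) ^ g = a) :
    S.card * Nat.sqrt p ≤ p * (Nat.sqrt p / q + 2 * m + 5) := by
  classical
  set f := X ^ e * G with hf
  set M := Nat.sqrt p with hM
  set J := M / q + m + 3 with hJ
  set K := p / q - q with hK
  have hq2 : 2 ≤ q := hq.two_le
  have hM2 : M * M ≤ p := Nat.sqrt_le p
  have hMlow : 2 * (m + 3) * q ≤ M := by
    rw [hM, Nat.le_sqrt]; nlinarith
  have hMp : M ≤ p := Nat.sqrt_le_self p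
  have h44 : 4 * ((m + 3) * (q * q)) ≤ p := by
    refine le_trans ?_ hsize
    have : (m + 3) * 1 ≤ (m + 3) * (m + 3) := Nat.mul_le_mul_left _ (by omega)
    calc 4 * ((m + 3) * (q * q)) = 4 * (q * q) * ((m + 3) * 1) := by ring
      _ ≤ 4 * (q * q) * ((m + 3) * (m + 3)) := Nat.mul_le_mul_left _ this
      _ = _ := by ring
  have hqle : q ≤ q * q := Nat.le_mul_self q
  have hqq : q * (q + 1) ≤ p := by
    have : 1 * (q * q) ≤ (m + 3) * (q * q) := Nat.mul_le_mul_right _ (by omega)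
    rw [mul_add]; omega
  have hpq : q + 1 ≤ p / q := by
    rw [Nat.le_div_iff_mul_le hq.pos]; linarith
  have hKpos : 0 < K := by omega
  have hKq : K + q = p / q := by omega
  have hqK : q * K + q * q ≤ p := by
    rw [← mul_add, hKq]; exact Nat.mul_div_le p q
  have hqK' : p < q * K + q * q + q := by
    have := Nat.lt_mul_div_succ p hq.pos
    rw [← hKq] at this; nlinarith
  have hcount : M * (K + M * m + J) < q * J * K := by
    have h1 : M < q * (M / q + 1) := Nat.lt_mul_div_succ M hq.pos
    have h2 : M + q * (m + 2) ≤ q * J := by rw [hJ]; nlinarith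
    have h3 : (M + q * (m + 2)) * K ≤ q * J * K := Nat.mul_le_mul_right _ h2
    have h4 : 2 * (M / q) ≤ M := by
      have : M / q ≤ M / 2 := Nat.div_le_div_left hq2 (by norm_num)
      omega
    have h5 : 2 * (M * J) ≤ p + 2 * (M * (m + 3)) := by
      have : M * (2 * (M / q)) ≤ M * M := Nat.mul_le_mul_left _ h4
      have e : 2 * (M * J) = M * (2 * (M / q)) + 2 * (M * (m + 3)) := by rw [hJ]; ring
      omega
    have h6 : 4 * (M * (m + 3)) ≤ p := by
      have : M * (2 * (m + 3) * 2) ≤ M * M := Nat.mul_le_mul_left _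
        ((Nat.mul_le_mul_left _ hq2).trans hMlow)
      have e : M * (2 * (m + 3) * 2) = 4 * (M * (m + 3)) := by ring
      omega
    have h7 : 2 * ((m + 2) * (q * q + q)) ≤ p := by
      have : (m + 2) * (q * q + q) ≤ (m + 3) * (q * q + q * q) :=
        Nat.mul_le_mul (by omega) (by omega)
      have e : (m + 3) * (q * q + q * q) = 2 * ((m + 3) * (q * q)) := by ring
      omega
    have h8 : (m + 2) * p ≤ (m + 2) * (q * K + q * q + q) := Nat.mul_le_mul_left _ hqK'.le
    have h9 : M * (M * m) ≤ p * m := by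
      rw [← mul_assoc]; exact Nat.mul_le_mul_right _ hM2
    have hp0 : 0 < p := by omega
    have e1 : (M + q * (m + 2)) * K = M * K + (m + 2) * (q * K) := by ring
    have e2 : (m + 2) * (q * K + q * q + q) = (m + 2) * (q * K) + (m + 2) * (q * q + q) := by ring
    have e3 : M * (K + M * m + J) = M * K + M * (M * m) + M * J := by ring
    have e4 : (m + 2) * p = p * m + 2 * p := by ring
    omega
  obtain ⟨k, ⟨i0, hi0⟩, hkd, hk⟩ := exists_aux f m hm a g q J K M hKpos hcount
  set R := ∑ i : Fin q × Fin J, k i * f ^ (g * (i.1 : ℕ)) * X ^ (p * (i.2 : ℕ)) with hR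
  have hG0 : G ≠ 0 := by rintro rfl; simp at hG
  have hf0 : f ≠ 0 := mul_ne_zero (pow_ne_zero _ X_ne_zero) hG0
  have htr : ∀ i, k i ≠ 0 → (k i * f ^ (g * (i.1 : ℕ)) * X ^ (p * (i.2 : ℕ))).natTrailingDegree =
      (k i).natTrailingDegree + g * (i.1 : ℕ) * e + p * (i.2 : ℕ) := by
    intro i hi
    rw [natTrailingDegree_mul_X_pow (mul_ne_zero hi (pow_ne_zero _ hf0)), hf, mul_pow, ← pow_mul,
      mul_comm (X ^ _), ← mul_assoc, natTrailingDegree_mul_X_pow (mul_ne_zero hi (pow_ne_zero _ hG0)),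
      natTrailingDegree_mul hi (pow_ne_zero _ hG0)]
    have : (G ^ (g * (i.1 : ℕ))).natTrailingDegree = 0 := by
      rw [natTrailingDegree_eq_zero]; right
      rw [coeff_zero_eq_eval_zero, eval_pow, ← coeff_zero_eq_eval_zero]
      exact pow_ne_zero _ hG
    rw [this]; ring
  have hR0 : R ≠ 0 := by
    apply sum_ne_zero_of_trailing
    · exact ⟨i0, Finset.mem_univ _, mul_ne_zero (mul_ne_zero hi0 (pow_ne_zero _ hf0))
        (pow_ne_zero _ X_ne_zero)⟩
    · intro i _ j _ hi hj hij
      have hi' : k i ≠ 0 := by intro h; simp [h] at hi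
      have hj' : k j ≠ 0 := by intro h; simp [h] at hj
      rw [htr i hi', htr j hj'] at hij
      have := window_inj hq hg he0 heq hqK i.1.2 j.1.2
        ((natTrailingDegree_le_natDegree _).trans_lt (hkd i))
        ((natTrailingDegree_le_natDegree _).trans_lt (hkd j)) hij
      exact Prod.ext (Fin.ext this.1) (Fin.ext this.2)
  have hdvd : ∀ x ∈ S, (X - C x) ^ M ∣ R := by
    intro x hx
    obtain ⟨hx0, hxa⟩ := hS x hx
    apply dvd_of_delta f x hx0 M R hMp
    intro l hl
    rw [hR, delta_sum]
    have := congrArg (fun Q => Q.eval x) (hk l hl)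
    simp only [eval_finsetSum, eval_mul, eval_C, eval_pow, eval_X, eval_zero] at this ⊢
    rw [← this]
    apply Finset.sum_congr rfl
    intro i _
    rw [pow_mul, hxa, pow_mul, ZMod.pow_card]
  have hprod : ∏ x ∈ S, (X - C x) ^ M ∣ R := by
    apply Finset.prod_dvd_of_coprime
    · intro x _ y _ hxy
      exact (pairwise_coprime_X_sub_C (s := id) Function.injective_id hxy).pow
    · exact hdvd
  have hdeg := natDegree_le_of_dvd hprod hR0
  rw [Finset.prod_pow, natDegree_pow, natDegree_prod _ _ (fun x _ => X_sub_C_ne_zero x)] at hdeg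
  simp only [natDegree_X_sub_C, Finset.sum_const, smul_eq_mul, mul_one] at hdeg
  have hRd : R.natDegree ≤ K + p * m + p * J := by
    apply natDegree_sum_le_of_forall_le
    intro i _
    apply natDegree_mul_le.trans
    rw [natDegree_X_pow]
    have h1 : (k i * f ^ (g * (i.1 : ℕ))).natDegree ≤ K + p * m := by
      apply natDegree_mul_le.trans
      rw [natDegree_pow]
      have h2 : g * (i.1 : ℕ) ≤ p := by
        have := Nat.mul_le_mul_left g i.1.2.le
        rw [mul_comm g q] at this; omega
      have h3 := hkd i
      have h4 := Nat.mul_le_mul h2 hm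
      omega
    have h5 : p * (i.2 : ℕ) ≤ p * J := Nat.mul_le_mul_left _ i.2.2.le
    omega
  have hKp : K ≤ p := by have := Nat.div_le_self p q; omega
  calc S.card * M = M * S.card := mul_comm _ _
    _ ≤ K + p * m + p * J := hdeg.trans hRd
    _ ≤ p + p * m + p * J := by omega
    _ ≤ p * (M / q + 2 * m + 5) := by
      have : p * (M / q + 2 * m + 5) = p + p * m + p * (M / q + m + 3) + p := by ring
      rw [hJ]; omega

/-- Real form of the Stepanov bound. -/
lemma stepanov_count_real {p q g e m : ℕ} [Fact p.Prime] (hq : q.Prime) (hg : q * g + 1 = p)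
    (he0 : 0 < e) (heq : e < q) (G : (ZMod p)[X]) (hG : G.coeff 0 ≠ 0)
    (hm : (X ^ e * G).natDegree ≤ m) (hsize : 4 * (m + 3) ^ 2 * q ^ 2 ≤ p) (a : ZMod p)
    (S : Finset (ZMod p))
    (hS : ∀ x ∈ S, (X ^ e * G).eval x ≠ 0 ∧ ((X ^ e * G).eval x) ^ g = a) :
    (S.card : ℝ) ≤ p / q + (4 * m + 10) * Real.sqrt p := by
  have h := stepanov_count hq hg he0 heq G hG hm hsize a S hS
  set M := Nat.sqrt p with hM
  have hq0 : (0 : ℝ) < q := by exact_mod_cast hq.pos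
  have hp1 : 1 ≤ p := by omega
  have hM1 : 1 ≤ M := by rw [hM, Nat.le_sqrt]; omega
  have hMr : (1 : ℝ) ≤ M := by exact_mod_cast hM1
  have hs : Real.sqrt p ≤ 2 * M := by
    apply Real.sqrt_le_iff.mpr
    refine ⟨by positivity, ?_⟩
    have : p < (M + 1) * (M + 1) := Nat.lt_succ_sqrt p
    have h2 : (p : ℝ) ≤ (M + 1) * (M + 1) := by exact_mod_cast this.le
    nlinarith
  have hss : Real.sqrt p * Real.sqrt p = p := Real.mul_self_sqrt (by positivity)
  have hr : (S.card : ℝ) * M ≤ p * ((M / q : ℕ) + 2 * m + 5) := by exact_mod_cast h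
  have hd : ((M / q : ℕ) : ℝ) ≤ M / q := Nat.cast_div_le
  have hpM : (p : ℝ) ≤ 2 * Real.sqrt p * M := by nlinarith [Real.sqrt_nonneg (p : ℝ)]
  have : (S.card : ℝ) * M ≤ (p / q + (4 * m + 10) * Real.sqrt p) * M := by
    calc (S.card : ℝ) * M ≤ p * ((M / q : ℕ) + 2 * m + 5) := hr
      _ ≤ p * (M / q + 2 * m + 5) := by gcongr
      _ = p / q * M + p * (2 * m + 5) := by ring
      _ ≤ p / q * M + (2 * Real.sqrt p * M) * (2 * m + 5) := by gcongr
      _ = _ := by ring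
  exact le_of_mul_le_mul_right this (by linarith)

end SG
end

section

open Polynomial

namespace SG

lemma pow_eq_one_of_char {p q g : ℕ} [Fact p.Prime] (hq : q.Prime) (hg : q * g + 1 = p)
    (χ : MulChar (ZMod p) ℂ) (hχ : orderOf χ = q) (y : ZMod p) (hy : y ≠ 0) (h : χ y = 1) :
    y ^ g = 1 := by
  obtain ⟨ζ, hζ⟩ := IsCyclic.exists_generator (α := (ZMod p)ˣ)
  have hne : χ (ζ : ZMod p) ≠ 1 := by
    intro h1
    have : χ = 1 := (MulChar.eq_iff hζ _ _).mpr (by simp [h1])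
    rw [this, orderOf_one] at hχ
    exact hq.one_lt.ne hχ
  have hpow : χ (ζ : ZMod p) ^ q = 1 := by
    have : χ ^ q = 1 := by rw [← hχ]; exact pow_orderOf_eq_one χ
    have h2 := congrArg (fun c : MulChar (ZMod p) ℂ => c (ζ : ZMod p)) this
    rw [← MulChar.pow_apply_coe]
    simpa using h2
  have hord : orderOf (χ (ζ : ZMod p)) = q := by
    have := Fact.mk hq
    exact orderOf_eq_prime hpow hne
  obtain ⟨n, hn⟩ := (mem_powers_iff_mem_zpowers (G := (ZMod p)ˣ)).mpr (hζ (Units.mk0 y hy))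
  have hn' : (ζ : ZMod p) ^ n = y := by
    have := congrArg (fun u : (ZMod p)ˣ => (u : ZMod p)) hn
    simpa using this
  have h3 : χ (ζ : ZMod p) ^ n = 1 := by rw [← map_pow, hn', h]
  have h4 : q ∣ n := by rw [← hord]; exact orderOf_dvd_of_pow_eq_one h3
  obtain ⟨t, rfl⟩ := h4
  rw [← hn', ← pow_mul, show q * t * g = (q * g) * t by ring, show q * g = p - 1 by omega, pow_mul,
    ZMod.pow_card_sub_one_eq_one ζ.ne_zero, one_pow]

lemma char_sum_bound {p q g e m : ℕ} [Fact p.Prime] (hq : q.Prime) (hg : q * g + 1 = p)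
    (χ : MulChar (ZMod p) ℂ) (hχ : orderOf χ = q)
    (he0 : 0 < e) (heq : e < q) (G : (ZMod p)[X]) (hG : G.coeff 0 ≠ 0)
    (hm : (X ^ e * G).natDegree ≤ m) (hsize : 4 * (m + 3) ^ 2 * q ^ 2 ≤ p) :
    ‖∑ x : ZMod p, χ ((X ^ e * G).eval x)‖ ≤ q * ((4 * m + 10) * Real.sqrt p) + m := by
  classical
  set f := X ^ e * G with hf
  have hG0 : G ≠ 0 := by rintro rfl; simp at hG
  have hf0 : f ≠ 0 := mul_ne_zero (pow_ne_zero _ X_ne_zero) hG0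
  set ζ : ℂ := Complex.exp (2 * Real.pi * Complex.I / q) with hζ
  have hprim : IsPrimitiveRoot ζ q := Complex.isPrimitiveRoot_exp q hq.ne_zero
  have hznorm : ‖ζ‖ = 1 := hprim.norm'_eq_one hq.ne_zero
  set N : ℕ → Finset (ZMod p) := fun t => Finset.univ.filter (fun x => χ (f.eval x) = ζ ^ t) with hN
  set U : ℝ := p / q + (4 * m + 10) * Real.sqrt p with hU
  have hq0 : (q : ℝ) ≠ 0 := by exact_mod_cast hq.ne_zero
  have hNU : ∀ t, ((N t).card : ℝ) ≤ U := by
    intro t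
    rcases (N t).eq_empty_or_nonempty with h | ⟨x0, hx0⟩
    · rw [h]; simp only [Finset.card_empty, Nat.cast_zero]; positivity
    · have hne : ∀ x ∈ N t, f.eval x ≠ 0 := by
        intro x hx h0
        have := (Finset.mem_filter.mp hx).2
        rw [h0, MulChar.map_zero] at this
        exact pow_ne_zero t (by rw [← norm_ne_zero_iff, hznorm]; norm_num) this.symm
      refine stepanov_count_real hq hg he0 heq G hG hm hsize ((f.eval x0) ^ g) (N t) ?_
      intro x hx
      refine ⟨hne x hx, ?_⟩
      have h1 : χ (f.eval x * (f.eval x0)⁻¹) = 1 := by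
        have e1 : χ (f.eval x) = χ (f.eval x0) := by
          rw [(Finset.mem_filter.mp hx).2, (Finset.mem_filter.mp hx0).2]
        rw [map_mul, e1, ← map_mul, mul_inv_cancel₀ (hne x0 hx0), map_one]
      have h2 := pow_eq_one_of_char hq hg χ hχ _ (mul_ne_zero (hne x hx) (inv_ne_zero (hne x0 hx0))) h1
      rw [mul_pow, inv_pow] at h2
      exact (mul_inv_eq_one₀ (pow_ne_zero _ (hne x0 hx0))).mp h2
  have hone : ∀ x, f.eval x ≠ 0 → ∃ t ∈ Finset.range q, ∀ s ∈ Finset.range q,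
      (χ (f.eval x) = ζ ^ s ↔ s = t) := by
    intro x hx
    have hpow : χ (f.eval x) ^ q = 1 := by
      have : χ ^ q = 1 := by rw [← hχ]; exact pow_orderOf_eq_one χ
      rw [← MulChar.pow_apply' χ hq.ne_zero, this, MulChar.one_apply (IsUnit.mk0 _ hx)]
    have : NeZero q := ⟨hq.ne_zero⟩
    obtain ⟨t, ht, hte⟩ := hprim.eq_pow_of_pow_eq_one hpow
    refine ⟨t, Finset.mem_range.mpr ht, fun s hs => ?_⟩
    rw [← hte]
    constructor
    · intro h; exact (hprim.pow_inj ht (Finset.mem_range.mp hs) h).symm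
    · rintro rfl; rfl
  have hsum : ∑ x : ZMod p, χ (f.eval x) = ∑ t ∈ Finset.range q, ζ ^ t * ((N t).card : ℂ) := by
    have h1 : ∀ x : ZMod p, χ (f.eval x) =
        ∑ t ∈ Finset.range q, if χ (f.eval x) = ζ ^ t then ζ ^ t else 0 := by
      intro x
      by_cases hx : f.eval x = 0
      · rw [hx, MulChar.map_zero, Finset.sum_eq_zero]
        intro t _
        rw [if_neg]
        intro h
        exact pow_ne_zero t (by rw [← norm_ne_zero_iff, hznorm]; norm_num) h.symm
      · obtain ⟨t, ht, hts⟩ := hone x hx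
        rw [Finset.sum_eq_single t]
        · rw [if_pos ((hts t ht).mpr rfl)]; exact (hts t ht).mpr rfl
        · intro s hs hst
          rw [if_neg]
          intro h; exact hst ((hts s hs).mp h)
        · intro h; exact absurd ht h
    rw [Finset.sum_congr rfl (fun x _ => h1 x), Finset.sum_comm]
    apply Finset.sum_congr rfl
    intro t _
    rw [← Finset.sum_filter, Finset.sum_const, nsmul_eq_mul, mul_comm]
  have hcard : (p : ℝ) - m ≤ ∑ t ∈ Finset.range q, ((N t).card : ℝ) := by
    have h1 : (Finset.univ : Finset (ZMod p)) ⊆ f.roots.toFinset ∪ (Finset.range q).biUnion N := by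
      intro x _
      by_cases hx : f.eval x = 0
      · apply Finset.mem_union_left
        rw [Multiset.mem_toFinset, mem_roots hf0]; exact hx
      · apply Finset.mem_union_right
        obtain ⟨t, ht, hts⟩ := hone x hx
        rw [Finset.mem_biUnion]
        exact ⟨t, ht, Finset.mem_filter.mpr ⟨Finset.mem_univ _, (hts t ht).mpr rfl⟩⟩
    have h2 := (Finset.card_le_card h1).trans (Finset.card_union_le _ _)
    rw [Finset.card_univ, ZMod.card] at h2
    have h3 : f.roots.toFinset.card ≤ m :=
      (Multiset.toFinset_card_le _).trans ((card_roots' f).trans hm)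
    have h4 : ((Finset.range q).biUnion N).card ≤ ∑ t ∈ Finset.range q, (N t).card :=
      Finset.card_biUnion_le
    have h5 : p ≤ m + ∑ t ∈ Finset.range q, (N t).card := by omega
    have h6 : (p : ℝ) ≤ m + ∑ t ∈ Finset.range q, ((N t).card : ℝ) := by exact_mod_cast h5
    linarith
  have hz : ∑ t ∈ Finset.range q, ζ ^ t * (U : ℂ) = 0 := by
    rw [← Finset.sum_mul, hprim.geom_sum_eq_zero hq.one_lt, zero_mul]
  have heq2 : ∑ x : ZMod p, χ (f.eval x) =
      ∑ t ∈ Finset.range q, ζ ^ t * (((N t).card : ℂ) - U) := by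
    rw [hsum]
    simp only [mul_sub, Finset.sum_sub_distrib, hz, sub_zero]
  rw [heq2]
  calc ‖∑ t ∈ Finset.range q, ζ ^ t * (((N t).card : ℂ) - U)‖
      ≤ ∑ t ∈ Finset.range q, ‖ζ ^ t * (((N t).card : ℂ) - U)‖ := norm_sum_le _ _
    _ = ∑ t ∈ Finset.range q, (U - (N t).card) := by
        apply Finset.sum_congr rfl
        intro t _
        rw [norm_mul, norm_pow, hznorm, one_pow, one_mul]
        have : (((N t).card : ℂ) - U) = (((N t).card - U : ℝ) : ℂ) := by push_cast; rfl
        rw [this, Complex.norm_real, Real.norm_eq_abs, abs_of_nonpos (by linarith [hNU t])]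
        ring
    _ = q * U - ∑ t ∈ Finset.range q, ((N t).card : ℝ) := by
        rw [Finset.sum_sub_distrib, Finset.sum_const, Finset.card_range, nsmul_eq_mul]
    _ ≤ q * U - (p - m) := by linarith
    _ = q * ((4 * m + 10) * Real.sqrt p) + m := by
        rw [hU, mul_add, mul_div_cancel₀ _ hq0]; ring

/-- Exponents of the moment expansion. -/
def ex (r q : ℕ) : Fin r ⊕ Fin r → ℕ := Sum.elim (fun _ => 1) (fun _ => q - 1)

lemma good_tuple {p q g r : ℕ} [Fact p.Prime] (hq : q.Prime) (hg : q * g + 1 = p)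
    (χ : MulChar (ZMod p) ℂ) (hχ : orderOf χ = q)
    (hsize : 4 * (2 * r * q + 3) ^ 2 * q ^ 2 ≤ p)
    (u : Fin r ⊕ Fin r → ZMod p) (i0 : Fin r ⊕ Fin r) (hi0 : ∀ i, i ≠ i0 → u i ≠ u i0) :
    ‖∑ x : ZMod p, ∏ i, χ (x + u i) ^ (ex r q i)‖ ≤
      q * ((4 * (2 * r * q : ℕ) + 10) * Real.sqrt p) + (2 * r * q : ℕ) := by
  classical
  have hex : ∀ i, 0 < ex r q i ∧ ex r q i < q := by
    have := hq.two_le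
    rintro (i | i) <;> simp [ex] <;> omega
  set G : (ZMod p)[X] := ∏ i ∈ Finset.univ.erase i0, (X + C (u i - u i0)) ^ (ex r q i) with hG
  have hmain : ∑ x : ZMod p, ∏ i, χ (x + u i) ^ (ex r q i) =
      ∑ x : ZMod p, χ ((X ^ (ex r q i0) * G).eval x) := by
    rw [← Equiv.sum_comp (Equiv.subRight (u i0))]
    apply Finset.sum_congr rfl
    intro x _
    rw [← Finset.mul_prod_erase _ _ (Finset.mem_univ i0), hG, eval_mul, eval_prod, map_mul, map_prod]
    congr 1
    · simp
    · apply Finset.prod_congr rfl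
      intro i _
      simp only [Equiv.subRight_apply, eval_pow, eval_add, eval_X, eval_C, map_pow]
      congr 2; ring
  rw [hmain]
  apply char_sum_bound hq hg χ hχ (hex i0).1 (hex i0).2 G
  · rw [coeff_zero_eq_eval_zero, hG, eval_prod, Finset.prod_ne_zero_iff]
    intro i hi
    simp only [eval_pow, eval_add, eval_X, eval_C, zero_add]
    exact pow_ne_zero _ (sub_ne_zero.mpr (hi0 i (Finset.ne_of_mem_erase hi)))
  · have h1 : ∀ i : Fin r ⊕ Fin r, ((X + C (u i - u i0)) ^ (ex r q i)).natDegree ≤ q := by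
      intro i
      rw [natDegree_pow, natDegree_X_add_C, mul_one]; exact (hex i).2.le
    have h2 : G.natDegree ≤ ∑ i ∈ Finset.univ.erase i0, q :=
      (natDegree_prod_le _ _).trans (Finset.sum_le_sum fun i _ => h1 i)
    rw [Finset.sum_const, Finset.card_erase_of_mem (Finset.mem_univ _), Finset.card_univ,
      Fintype.card_sum, Fintype.card_fin, smul_eq_mul] at h2
    apply natDegree_mul_le.trans
    rw [natDegree_X_pow]
    have h3 := (hex i0).2
    have hr : 1 ≤ r + r := by
      rcases i0 with i | i <;> have := i.2 <;> omega
    obtain ⟨s, hs⟩ : ∃ s, r + r = s + 1 := ⟨r + r - 1, by omega⟩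
    rw [hs, Nat.add_sub_cancel] at h2
    have : 2 * r * q = (s + 1) * q := by rw [← hs]; ring
    rw [this, add_mul]; omega
  · exact hsize

lemma bad_count {α : Type*} [DecidableEq α] (r : ℕ) (Bs : Finset α) :
    ((Fintype.piFinset (fun _ : Fin r ⊕ Fin r => Bs)).filter
      (fun u => ∀ i, ∃ j, j ≠ i ∧ u j = u i)).card ≤ Bs.card ^ r * r ^ (2 * r) := by
  classical
  have hsub : (Fintype.piFinset (fun _ : Fin r ⊕ Fin r => Bs)).filter
      (fun u => ∀ i, ∃ j, j ≠ i ∧ u j = u i) ⊆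
      ((Fintype.piFinset (fun _ : Fin r => Bs)) ×ˢ
        (Finset.univ : Finset (Fin r ⊕ Fin r → Fin r))).image (fun wh => wh.1 ∘ wh.2) := by
    intro u hu
    rw [Finset.mem_filter, Fintype.mem_piFinset] at hu
    obtain ⟨huB, hu2⟩ := hu
    set T := Finset.univ.image u with hT
    have hTB : ∀ t ∈ T, t ∈ Bs := by
      intro t ht
      obtain ⟨i, _, rfl⟩ := Finset.mem_image.mp ht
      exact huB i
    have hTc : T.card ≤ r := by
      have h1 : 2 * T.card ≤ (Finset.univ : Finset (Fin r ⊕ Fin r)).card := by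
        apply Finset.mul_card_image_le_card
        intro b hb
        obtain ⟨i, _, rfl⟩ := Finset.mem_image.mp hb
        obtain ⟨j, hji, hj⟩ := hu2 i
        rw [← Finset.card_pair hji]
        apply Finset.card_le_card
        intro k hk
        rw [Finset.mem_insert, Finset.mem_singleton] at hk
        rcases hk with rfl | rfl
        · simp [hj]
        · simp
      rw [Finset.card_univ, Fintype.card_sum, Fintype.card_fin] at h1
      omega
    have hc : Fintype.card T ≤ Fintype.card (Fin r) := by simpa using hTc
    obtain ⟨φ⟩ := Function.Embedding.nonempty_of_card_le hc
    have hmem : ∀ i, u i ∈ T := fun i => Finset.mem_image_of_mem _ (Finset.mem_univ _)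
    rcases Nat.eq_zero_or_pos r with h0 | h0
    · subst h0
      rw [Finset.mem_image]
      refine ⟨(Fin.elim0, fun i => Sum.elim id id i), ?_, ?_⟩
      · simp only [Finset.mem_product, Fintype.mem_piFinset, Finset.mem_univ, and_true]
        intro k; exact k.elim0
      · funext i; rcases i with i | i <;> exact i.elim0
    have : Nonempty T := ⟨⟨u (Sum.inl ⟨0, h0⟩), hmem _⟩⟩
    rw [Finset.mem_image]
    refine ⟨(fun k => (Function.invFun φ k : T), fun i => φ ⟨u i, hmem i⟩), ?_, ?_⟩
    · simp only [Finset.mem_product, Fintype.mem_piFinset, Finset.mem_univ, and_true]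
      intro k; exact hTB _ (Function.invFun φ k).2
    · funext i
      simp only [Function.comp]
      rw [Function.leftInverse_invFun φ.injective]
  refine (Finset.card_le_card hsub).trans (Finset.card_image_le.trans ?_)
  rw [Finset.card_product, Fintype.card_piFinset, Finset.prod_const, Finset.card_univ,
    Finset.card_univ, Fintype.card_fun, Fintype.card_fin, Fintype.card_sum, Fintype.card_fin,
    two_mul]

lemma moment_bound {p q g r : ℕ} [Fact p.Prime] (hq : q.Prime) (hg : q * g + 1 = p)
    (χ : MulChar (ZMod p) ℂ) (hχ : orderOf χ = q)
    (hsize : 4 * (2 * r * q + 3) ^ 2 * q ^ 2 ≤ p) (Bs : Finset (ZMod p)) :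
    ∑ x : ZMod p, ‖∑ b ∈ Bs, χ (x + b)‖ ^ (2 * r) ≤
      (Bs.card : ℝ) ^ r * r ^ (2 * r) * p + (Bs.card : ℝ) ^ (2 * r) *
      (q * ((4 * (2 * r * q : ℕ) + 10) * Real.sqrt p) + (2 * r * q : ℕ)) := by
  classical
  set W : ℝ := q * ((4 * (2 * r * q : ℕ) + 10) * Real.sqrt p) + (2 * r * q : ℕ) with hW
  have hW0 : 0 ≤ W := by positivity
  have hconj : ∀ z : ZMod p, (starRingEnd ℂ) (χ z) = χ z ^ (q - 1) := by
    intro z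
    by_cases hz : z = 0
    · have : q - 1 ≠ 0 := by have := hq.two_le; omega
      rw [hz, MulChar.map_zero, map_zero, zero_pow this]
    · have hpow : χ z ^ q = 1 := by
        have : χ ^ q = 1 := by rw [← hχ]; exact pow_orderOf_eq_one χ
        rw [← MulChar.pow_apply' χ hq.ne_zero, this, MulChar.one_apply (IsUnit.mk0 _ hz)]
      have hn : ‖χ z‖ = 1 := Complex.norm_eq_one_of_pow_eq_one hpow hq.ne_zero
      have h0 : χ z ≠ 0 := by rw [← norm_ne_zero_iff, hn]; norm_num
      apply mul_left_cancel₀ h0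
      rw [Complex.mul_conj, Complex.normSq_eq_norm_sq, hn, ← pow_succ',
        Nat.sub_add_cancel hq.one_lt.le, hpow]; simp
  have hexp : ∀ x : ZMod p, ((‖∑ b ∈ Bs, χ (x + b)‖ ^ (2 * r) : ℝ) : ℂ) =
      ∑ u ∈ Fintype.piFinset (fun _ : Fin r ⊕ Fin r => Bs), ∏ i, χ (x + u i) ^ (ex r q i) := by
    intro x
    rw [← Finset.prod_univ_sum (fun _ : Fin r ⊕ Fin r => Bs)
      (fun i b => χ (x + b) ^ (ex r q i)), Fintype.prod_sum_type]
    simp only [ex, Sum.elim_inl, Sum.elim_inr, pow_one, Finset.prod_const, Finset.card_univ,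
      Fintype.card_fin]
    simp only [← hconj]
    rw [← map_sum (starRingEnd ℂ), ← mul_pow, Complex.mul_conj, Complex.normSq_eq_norm_sq, pow_mul]
    push_cast; rfl
  have hle1 : ∀ z : ZMod p, ‖χ z‖ ≤ 1 := by
    intro z
    by_cases hz : z = 0
    · rw [hz, MulChar.map_zero]; simp
    · have hpow : χ z ^ q = 1 := by
        have : χ ^ q = 1 := by rw [← hχ]; exact pow_orderOf_eq_one χ
        rw [← MulChar.pow_apply' χ hq.ne_zero, this, MulChar.one_apply (IsUnit.mk0 _ hz)]
      exact (Complex.norm_eq_one_of_pow_eq_one hpow hq.ne_zero).le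
  set Pi := Fintype.piFinset (fun _ : Fin r ⊕ Fin r => Bs) with hPi
  have hPic : Pi.card = Bs.card ^ (2 * r) := by
    rw [hPi, Fintype.card_piFinset, Finset.prod_const, Finset.card_univ, Fintype.card_sum,
      Fintype.card_fin, two_mul]
  set bad : (Fin r ⊕ Fin r → ZMod p) → Prop := fun u => ∀ i, ∃ j, j ≠ i ∧ u j = u i with hbad
  have htot : ((∑ x : ZMod p, ‖∑ b ∈ Bs, χ (x + b)‖ ^ (2 * r) : ℝ) : ℂ) =
      ∑ u ∈ Pi, ∑ x : ZMod p, ∏ i, χ (x + u i) ^ (ex r q i) := by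
    rw [Finset.sum_comm]; push_cast
    apply Finset.sum_congr rfl
    intro x _
    rw [← hexp x]; push_cast; rfl
  have hnn : 0 ≤ ∑ x : ZMod p, ‖∑ b ∈ Bs, χ (x + b)‖ ^ (2 * r) :=
    Finset.sum_nonneg fun x _ => by positivity
  have hnorm : ∑ x : ZMod p, ‖∑ b ∈ Bs, χ (x + b)‖ ^ (2 * r) =
      ‖∑ u ∈ Pi, ∑ x : ZMod p, ∏ i, χ (x + u i) ^ (ex r q i)‖ := by
    rw [← htot, Complex.norm_real, Real.norm_eq_abs, abs_of_nonneg hnn]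
  rw [hnorm]
  refine (norm_sum_le _ _).trans ?_
  rw [← Finset.sum_filter_add_sum_filter_not Pi bad]
  apply add_le_add
  · calc ∑ u ∈ Pi.filter bad, ‖∑ x : ZMod p, ∏ i, χ (x + u i) ^ (ex r q i)‖
        ≤ ∑ u ∈ Pi.filter bad, (p : ℝ) := by
          apply Finset.sum_le_sum
          intro u _
          refine (norm_sum_le _ _).trans ?_
          calc ∑ x : ZMod p, ‖∏ i, χ (x + u i) ^ (ex r q i)‖ ≤ ∑ x : ZMod p, (1 : ℝ) := by
                apply Finset.sum_le_sum
                intro x _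
                rw [norm_prod]
                apply Finset.prod_le_one
                · intro i _; positivity
                · intro i _; rw [norm_pow]; exact pow_le_one₀ (norm_nonneg _) (hle1 _)
            _ = p := by simp [ZMod.card]
      _ = ((Pi.filter bad).card : ℝ) * p := by rw [Finset.sum_const, nsmul_eq_mul]
      _ ≤ (Bs.card : ℝ) ^ r * r ^ (2 * r) * p := by
          have := bad_count r Bs
          have h2 : ((Pi.filter bad).card : ℝ) ≤ (Bs.card : ℝ) ^ r * r ^ (2 * r) := by
            exact_mod_cast this
          gcongr
  · calc ∑ u ∈ Pi.filter (fun u => ¬ bad u), ‖∑ x : ZMod p, ∏ i, χ (x + u i) ^ (ex r q i)‖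
        ≤ ∑ u ∈ Pi.filter (fun u => ¬ bad u), W := by
          apply Finset.sum_le_sum
          intro u hu
          have := (Finset.mem_filter.mp hu).2
          rw [hbad] at this
          push Not at this
          obtain ⟨i0, hi0⟩ := this
          exact good_tuple hq hg χ hχ hsize u i0 hi0
      _ = ((Pi.filter (fun u => ¬ bad u)).card : ℝ) * W := by rw [Finset.sum_const, nsmul_eq_mul]
      _ ≤ (Bs.card : ℝ) ^ (2 * r) * W := by
          have : (Pi.filter (fun u => ¬ bad u)).card ≤ Bs.card ^ (2 * r) := by
            rw [← hPic]; exact Finset.card_filter_le _ _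
          have h2 : ((Pi.filter (fun u => ¬ bad u)).card : ℝ) ≤ (Bs.card : ℝ) ^ (2 * r) := by
            exact_mod_cast this
          gcongr

end SG
end

section

namespace SG

lemma shift_sum (h : ℕ → ℝ) (hh : ∀ n, |h n| ≤ 1) (N k : ℕ) :
    ∑ n ∈ Finset.range N, h (n + 1) - 2 * k ≤ ∑ n ∈ Finset.range N, h (n + 1 + k) := by
  induction k with
  | zero => simp
  | succ k ih =>
    have h1 := Finset.sum_range_succ (fun n => h (n + 1 + k)) N
    have h2 := Finset.sum_range_succ' (fun n => h (n + 1 + k)) N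
    have e : ∀ n, n + 1 + 1 + k = n + 1 + (k + 1) := fun n => by ring
    simp only [e] at h2
    have b1 := abs_le.mp (hh (N + 1 + k))
    have b2 := abs_le.mp (hh (0 + 1 + k))
    push_cast
    linarith

lemma char_norm_le {p : ℕ} [Fact p.Prime] (χ : MulChar (ZMod p) ℂ) (z : ZMod p) : ‖χ z‖ ≤ 1 := by
  by_cases hz : z = 0
  · rw [hz, MulChar.map_zero]; simp
  · have hpow : χ z ^ (p - 1) = 1 := by
      rw [← map_pow, ZMod.pow_card_sub_one_eq_one hz, map_one]
    have h2 := (Fact.out : p.Prime).two_le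
    exact (Complex.norm_eq_one_of_pow_eq_one hpow (by omega)).le

lemma burgess_step {p q g r : ℕ} [Fact p.Prime] (hq : q.Prime) (hg : q * g + 1 = p)
    (χ : MulChar (ZMod p) ℂ) (hχ : orderOf χ = q)
    (hsize : 4 * (2 * r * q + 3) ^ 2 * q ^ 2 ≤ p) (N A B : ℕ) (η : ℝ) (hη : 0 < η)
    (hN : 1 ≤ N) (hAN : A * N < p) (hB : B < p)
    (hAB : 2 * ((A : ℝ) * B) ≤ η * N)
    (hsum : 2 * η * N ≤ ∑ n ∈ Finset.range N, (χ ((n + 1 : ℕ) : ZMod p)).re)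
    (As : Finset ℕ) (hAs : ∀ a ∈ As, a.Prime ∧ a ≤ A ∧ 4 ≤ η * a) :
    (η / 4) * (As.card * N) * (η * B / 2) ^ (2 * r) ≤
      (B : ℝ) ^ r * r ^ (2 * r) * p + (B : ℝ) ^ (2 * r) *
      (q * ((4 * (2 * r * q : ℕ) + 10) * Real.sqrt p) + (2 * r * q : ℕ)) := by
  classical
  set Bs : Finset (ZMod p) := (Finset.range B).image (fun b => ((b + 1 : ℕ) : ZMod p)) with hBs
  have hcast : ∀ x y : ℕ, x < p → y < p → (x : ZMod p) = y → x = y := by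
    intro x y hx hy h
    rw [ZMod.natCast_eq_natCast_iff'] at h
    rwa [Nat.mod_eq_of_lt hx, Nat.mod_eq_of_lt hy] at h
  have hinj : Set.InjOn (fun b : ℕ => ((b + 1 : ℕ) : ZMod p)) (Finset.range B) := by
    intro b hb c hc h
    have hb := Finset.mem_range.mp hb
    have hc := Finset.mem_range.mp hc
    have := hcast (b + 1) (c + 1) (by omega) (by omega) h
    omega
  have hBc : Bs.card = B := by
    rw [hBs, Finset.card_image_of_injOn hinj, Finset.card_range]
  have hmom := moment_bound hq hg χ hχ hsize Bs
  rw [hBc] at hmom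
  set W : ZMod p → ℝ := fun x => ‖∑ b ∈ Bs, χ (x + b)‖ with hW
  have hWB : ∀ x, W x ≤ B := by
    intro x
    refine (norm_sum_le _ _).trans ?_
    calc ∑ b ∈ Bs, ‖χ (x + b)‖ ≤ ∑ b ∈ Bs, (1 : ℝ) :=
          Finset.sum_le_sum fun b _ => char_norm_le χ _
      _ = B := by simp [hBc]
  have hap : ∀ a ∈ As, a < p := by
    intro a ha
    have := (hAs a ha).2.1
    nlinarith
  have ha0 : ∀ a ∈ As, (a : ZMod p) ≠ 0 := by
    intro a ha h
    have := hcast a 0 (hap a ha) (by omega) (by simpa using h)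
    exact (hAs a ha).1.ne_zero this
  set π : ℕ × ℕ → ZMod p := fun ω => ((ω.2 + 1 : ℕ) : ZMod p) * (ω.1 : ZMod p)⁻¹ with hπ
  -- lower bound
  have hlow1 : ∀ a ∈ As, B * (η * N) ≤ ∑ n ∈ Finset.range N, W (π (a, n)) := by
    intro a ha
    have h1 : ∀ n, ∑ b ∈ Finset.range B, (χ ((n + 1 + a * (b + 1) : ℕ) : ZMod p)).re ≤ W (π (a, n)) := by
      intro n
      have e1 : ∑ b ∈ Finset.range B, χ ((n + 1 + a * (b + 1) : ℕ) : ZMod p) =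
          χ (a : ZMod p) * ∑ b ∈ Bs, χ (π (a, n) + b) := by
        rw [hBs, Finset.sum_image hinj, Finset.mul_sum]
        apply Finset.sum_congr rfl
        intro b _
        rw [← map_mul]
        congr 1
        simp only [hπ]
        push_cast
        have := ha0 a ha
        field_simp
      calc ∑ b ∈ Finset.range B, (χ ((n + 1 + a * (b + 1) : ℕ) : ZMod p)).re
          = (∑ b ∈ Finset.range B, χ ((n + 1 + a * (b + 1) : ℕ) : ZMod p)).re := by
            rw [Complex.re_sum]
        _ ≤ ‖∑ b ∈ Finset.range B, χ ((n + 1 + a * (b + 1) : ℕ) : ZMod p)‖ := Complex.re_le_norm _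
        _ ≤ W (π (a, n)) := by
            rw [e1, norm_mul]
            exact mul_le_of_le_one_left (norm_nonneg _) (char_norm_le χ _)
    refine le_trans ?_ (Finset.sum_le_sum fun n _ => h1 n)
    rw [Finset.sum_comm]
    have h2 : ∀ b ∈ Finset.range B, η * N ≤
        ∑ n ∈ Finset.range N, (χ ((n + 1 + a * (b + 1) : ℕ) : ZMod p)).re := by
      intro b hb
      have h3 := shift_sum (fun n => (χ (n : ZMod p)).re)
        (fun n => (Complex.abs_re_le_norm _).trans (char_norm_le χ _)) N (a * (b + 1))
      have h4 : ((a * (b + 1) : ℕ) : ℝ) ≤ A * B := by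
        have := Finset.mem_range.mp hb
        exact_mod_cast Nat.mul_le_mul (hAs a ha).2.1 this
      linarith
    calc (B : ℝ) * (η * N) = ∑ b ∈ Finset.range B, η * N := by simp
      _ ≤ _ := Finset.sum_le_sum h2
  set Ω := As ×ˢ Finset.range N with hΩ
  have hΩc : (Ω.card : ℝ) = As.card * N := by
    rw [hΩ, Finset.card_product, Finset.card_range]; push_cast; rfl
  have hlow : η * B * (As.card * N) ≤ ∑ ω ∈ Ω, W (π ω) := by
    rw [hΩ, Finset.sum_product]
    calc η * B * (As.card * N) = ∑ a ∈ As, (B * (η * N)) := by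
          rw [Finset.sum_const, nsmul_eq_mul]; ring
      _ ≤ _ := Finset.sum_le_sum hlow1
  -- the divisible part
  have hdiv : ((Ω.filter (fun ω => ω.1 ∣ ω.2 + 1)).card : ℝ) ≤ η / 4 * (As.card * N) := by
    have h1 : ((Ω.filter (fun ω => ω.1 ∣ ω.2 + 1)).card : ℝ) =
        ∑ a ∈ As, (((Finset.range N).filter (fun n => a ∣ n + 1)).card : ℝ) := by
      rw [Finset.card_filter, hΩ, Finset.sum_product]
      push_cast
      apply Finset.sum_congr rfl
      intro a _
      rw [Finset.card_filter]; push_cast; rfl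
    rw [h1]
    calc ∑ a ∈ As, (((Finset.range N).filter (fun n => a ∣ n + 1)).card : ℝ)
        ≤ ∑ a ∈ As, (η / 4 * N) := by
          apply Finset.sum_le_sum
          intro a ha
          rw [Nat.card_multiples N a]
          have h2 : ((N / a : ℕ) : ℝ) ≤ N / a := Nat.cast_div_le
          have h3 := (hAs a ha).2.2
          have h4 : (0 : ℝ) < a := by exact_mod_cast (hAs a ha).1.pos
          refine h2.trans ?_
          rw [div_le_iff₀ h4]
          have : (0 : ℝ) ≤ N := by positivity
          nlinarith
      _ = _ := by rw [Finset.sum_const, nsmul_eq_mul]; ring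
  set Ω' := Ω.filter (fun ω => ¬ (ω.1 ∣ ω.2 + 1) ∧ η * B / 2 ≤ W (π ω)) with hΩ'
  have hB0 : (0 : ℝ) ≤ B := by positivity
  have hup : ∑ ω ∈ Ω, W (π ω) ≤ (Ω'.card : ℝ) * B + (η / 4 * (As.card * N)) * B +
      (As.card * N) * (η * B / 2) := by
    have h1 : ∀ ω ∈ Ω, W (π ω) ≤ (if ω.1 ∣ ω.2 + 1 then (B : ℝ) else 0) +
        (if (¬ (ω.1 ∣ ω.2 + 1) ∧ η * B / 2 ≤ W (π ω)) then (B : ℝ) else 0) + η * B / 2 := by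
      intro ω _
      have hp : 0 ≤ η * B / 2 := by positivity
      by_cases c1 : ω.1 ∣ ω.2 + 1
      · simp only [c1, if_true, not_true_eq_false, false_and, if_false]
        linarith [hWB (π ω)]
      · by_cases c2 : η * B / 2 ≤ W (π ω)
        · simp only [c1, c2, if_true, not_false_eq_true, and_self, if_false]
          linarith [hWB (π ω)]
        · simp only [c1, c2, not_false_eq_true, and_false, if_false]
          linarith
    refine (Finset.sum_le_sum h1).trans ?_
    rw [Finset.sum_add_distrib, Finset.sum_add_distrib, ← Finset.sum_filter, ← Finset.sum_filter,
      Finset.sum_const, Finset.sum_const, Finset.sum_const, nsmul_eq_mul, nsmul_eq_mul, nsmul_eq_mul,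
      hΩc]
    have := mul_le_mul_of_nonneg_right hdiv hB0
    linarith
  rcases Nat.eq_zero_or_pos B with hB00 | hBpos
  · -- degenerate
    subst hB00
    rcases Nat.eq_zero_or_pos r with hr | hr
    · subst hr
      simp only [Nat.cast_zero, mul_zero, pow_zero, mul_one, zero_mul, one_mul, Nat.cast_zero] at hmom ⊢
      have hle : (Ω.card : ℝ) ≤ p := by
        have : Ω.card ≤ A * N := by
          rw [hΩ, Finset.card_product, Finset.card_range]
          apply Nat.mul_le_mul_right
          have : As ⊆ Finset.Icc 1 A := fun a ha =>
            Finset.mem_Icc.mpr ⟨(hAs a ha).1.one_lt.le, (hAs a ha).2.1⟩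
          simpa using Finset.card_le_card this
        exact_mod_cast (this.trans hAN.le)
      have hη4 : η / 4 ≤ 1 := by
        have h1 : ∑ n ∈ Finset.range N, (χ ((n + 1 : ℕ) : ZMod p)).re ≤ ∑ n ∈ Finset.range N, (1 : ℝ) :=
          Finset.sum_le_sum fun n _ => (Complex.re_le_norm _).trans (char_norm_le χ _)
        simp only [Finset.sum_const, Finset.card_range, nsmul_eq_mul, mul_one] at h1
        have hN' : (0 : ℝ) < N := by exact_mod_cast hN
        have : 2 * η * N ≤ 1 * N := by linarith
        have := le_of_mul_le_mul_right this hN'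
        linarith
      rw [hΩc] at hle
      have h5 : η / 4 * (As.card * N) ≤ 1 * (As.card * N) :=
        mul_le_mul_of_nonneg_right hη4 (by positivity)
      have h6 : (0:ℝ) ≤ q * ((4 * 0 + 10) * Real.sqrt p) := by positivity
      simp at h6 ⊢
      linarith
    · have h2r : 2 * r ≠ 0 := by omega
      simp [zero_pow h2r]
      positivity
  have hBr : (0 : ℝ) < B := by exact_mod_cast hBpos
  have hΩ'c : η / 4 * (As.card * N) ≤ Ω'.card := by
    have h1 := hlow.trans hup
    have : (η / 4 * (As.card * N)) * B ≤ Ω'.card * B := by nlinarith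
    exact le_of_mul_le_mul_right this hBr
  have hπinj : Set.InjOn π Ω' := by
    rintro ⟨a, n⟩ h1 ⟨a', n'⟩ h2 h
    simp only [hΩ', hΩ, Finset.coe_filter, Finset.mem_product, Finset.mem_range, Set.mem_ofPred_eq] at h1 h2
    obtain ⟨⟨ha, hn⟩, hnd, _⟩ := h1
    obtain ⟨⟨ha', hn'⟩, hnd', _⟩ := h2
    have h3 : (((n + 1) * a' : ℕ) : ZMod p) = (((n' + 1) * a : ℕ) : ZMod p) := by
      simp only [hπ] at h
      have e1 := ha0 a ha
      have e2 := ha0 a' ha'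
      field_simp at h
      push_cast at h ⊢
      linear_combination h
    have b1 : (n + 1) * a' < p := lt_of_le_of_lt
      (Nat.mul_le_mul hn (hAs a' ha').2.1) (by rwa [mul_comm A N] at hAN)
    have b2 : (n' + 1) * a < p := lt_of_le_of_lt
      (Nat.mul_le_mul hn' (hAs a ha).2.1) (by rwa [mul_comm A N] at hAN)
    have h4 := hcast _ _ b1 b2 h3
    have haa : a = a' := by
      have h5 : a ∣ (n + 1) * a' := ⟨n' + 1, by rw [h4]; ring⟩
      rcases (hAs a ha).1.dvd_mul.mp h5 with h6 | h6
      · exact absurd h6 hnd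
      · exact (Nat.prime_dvd_prime_iff_eq (hAs a ha).1 (hAs a' ha').1).mp h6
    subst haa
    have := Nat.eq_of_mul_eq_mul_right (hAs a ha).1.pos h4
    ext
    · rfl
    · simp only; omega
  have hfin : (Ω'.card : ℝ) * (η * B / 2) ^ (2 * r) ≤ ∑ x : ZMod p, W x ^ (2 * r) := by
    calc (Ω'.card : ℝ) * (η * B / 2) ^ (2 * r) = ∑ ω ∈ Ω', (η * B / 2) ^ (2 * r) := by
          rw [Finset.sum_const, nsmul_eq_mul]
      _ ≤ ∑ ω ∈ Ω', W (π ω) ^ (2 * r) := by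
          apply Finset.sum_le_sum
          intro ω hω
          exact pow_le_pow_left₀ (by positivity) (Finset.mem_filter.mp hω).2.2 _
      _ = ∑ x ∈ Ω'.image π, W x ^ (2 * r) := (Finset.sum_image (f := fun x => W x ^ (2 * r)) hπinj).symm
      _ ≤ ∑ x : ZMod p, W x ^ (2 * r) :=
          Finset.sum_le_sum_of_subset_of_nonneg (Finset.subset_univ _)
            (fun x _ _ => pow_nonneg (norm_nonneg _) _)
  exact (mul_le_mul_of_nonneg_right hΩ'c (by positivity)).trans (hfin.trans hmom)

end SG
end

section
namespace SG
open Nat in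
lemma log_fact (n : ℕ) : Real.log (n ! : ℕ) =
    ∑ l ∈ Nat.primesLE n, ((n !).factorization l : ℝ) * Real.log l := by
  rw [Real.log_nat_eq_sum_factorization, Finsupp.sum]
  apply Finset.sum_subset
  · intro l hl
    rw [Nat.support_factorization, Nat.mem_primeFactors] at hl
    rw [Nat.mem_primesLE]
    exact ⟨(hl.1.dvd_factorial).1 hl.2.1, hl.1⟩
  · intro l _ hl
    rw [Finsupp.notMem_support_iff] at hl
    simp [hl]

open Nat in
lemma mertens_upper (n : ℕ) (hn : 1 ≤ n) :
    ∑ l ∈ Nat.primesLE n, Real.log l / l ≤ Real.log n + Real.log 4 := by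
  have h1 : Real.log (n ! : ℕ) ≤ n * Real.log n := by
    rw [← Real.log_pow]
    apply Real.log_le_log
    · exact_mod_cast Nat.factorial_pos n
    · exact_mod_cast Nat.factorial_le_pow n
  have h2 : ∑ l ∈ Nat.primesLE n, ((n:ℝ) * (Real.log l / l) - Real.log l) ≤ Real.log (n ! : ℕ) := by
    rw [log_fact]
    apply Finset.sum_le_sum
    intro l hl
    rw [Nat.mem_primesLE] at hl
    have hlp : (0:ℝ) < l := by exact_mod_cast hl.2.pos
    have hlog : 0 ≤ Real.log l := Real.log_natCast_nonneg l
    have h3 : n / l ≤ (n !).factorization l := by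
      rw [Nat.factorization_factorial hl.2 (Nat.lt_succ_self _)]
      have := Finset.single_le_sum (f := fun i => n / l ^ i) (s := Finset.Ico 1 (Nat.log l n).succ)
        (fun i _ => Nat.zero_le _) (a := 1) (by
          simp only [Finset.mem_Ico, le_refl, true_and]
          have := Nat.log_pos hl.2.one_lt hl.1
          omega)
      simpa using this
    have h4 : (n : ℝ) / l - 1 ≤ ((n / l : ℕ) : ℝ) := by
      have h5 : n < l * (n / l) + l := by
        have := Nat.div_add_mod n l
        have := Nat.mod_lt n hl.2.pos
        omega
      have h6 : (n : ℝ) < l * ((n / l : ℕ) : ℝ) + l := by exact_mod_cast h5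
      rw [sub_le_iff_le_add, div_le_iff₀ hlp]
      nlinarith
    have h7 : (n : ℝ) / l - 1 ≤ ((n !).factorization l : ℝ) := h4.trans (by exact_mod_cast h3)
    calc (n:ℝ) * (Real.log l / l) - Real.log l = ((n : ℝ) / l - 1) * Real.log l := by ring
      _ ≤ _ := mul_le_mul_of_nonneg_right h7 hlog
  rw [Finset.sum_sub_distrib, ← Finset.mul_sum, ← Chebyshev.theta_eq_sum_primesLE_log] at h2
  have h3 := Chebyshev.theta_le_log4_mul_x (x := n) (by positivity)
  have hn' : (0:ℝ) < n := by exact_mod_cast hn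
  refine le_of_mul_le_mul_left ?_ hn'
  linarith

open Nat in
lemma mertens_lower : ∃ C : ℝ, 0 ≤ C ∧ ∀ n : ℕ, 1 ≤ n →
    Real.log n - C ≤ ∑ l ∈ Nat.primesLE n, Real.log l / l := by
  have hsum : Summable (fun n : ℕ => 4 * (n : ℝ) ^ (-(3/2) : ℝ)) :=
    (Real.summable_nat_rpow.2 (by norm_num)).mul_left 4
  refine ⟨1 + ∑' n : ℕ, 4 * (n : ℝ) ^ (-(3/2) : ℝ), by positivity, fun n hn => ?_⟩
  have hn' : (0:ℝ) < n := by exact_mod_cast hn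
  have h1 : (n : ℝ) * Real.log n - n ≤ Real.log (n ! : ℕ) := by
    have h := Real.pow_div_factorial_le_exp (n : ℝ) (by positivity) n
    have hf : (0:ℝ) < (n ! : ℕ) := by exact_mod_cast Nat.factorial_pos n
    have h2 := Real.log_le_log (by positivity) h
    rw [Real.log_div (by positivity) hf.ne', Real.log_pow, Real.log_exp] at h2
    linarith
  have h2 : Real.log (n ! : ℕ) ≤ ∑ l ∈ Nat.primesLE n,
      ((n:ℝ) * (Real.log l / l) + n * (4 * (l : ℝ) ^ (-(3/2) : ℝ))) := by
    rw [log_fact]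
    apply Finset.sum_le_sum
    intro l hl
    rw [Nat.mem_primesLE] at hl
    have hl2 : (2:ℝ) ≤ l := by exact_mod_cast hl.2.two_le
    have hlp : (0:ℝ) < l := by linarith
    have hlog : 0 ≤ Real.log l := Real.log_natCast_nonneg l
    have h3 : ((n !).factorization l : ℝ) ≤ n / (l - 1) := by
      have h := Nat.factorization_factorial_le_div_pred hl.2 n
      have h4 : ((n !).factorization l : ℝ) ≤ ((n / (l - 1) : ℕ) : ℝ) := by exact_mod_cast h
      refine h4.trans (Nat.cast_div_le.trans ?_)
      rw [Nat.cast_sub hl.2.one_le, Nat.cast_one]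
    have h5 : Real.log l ≤ 2 * (l:ℝ) ^ ((1:ℝ)/2) := by
      have := Real.log_le_rpow_div (x := l) (ε := 1/2) hlp.le (by norm_num)
      linarith
    have h6 : Real.log l / (l * (l - 1)) ≤ 4 * (l : ℝ) ^ (-(3/2) : ℝ) := by
      rw [div_le_iff₀ (by nlinarith)]
      have e1 : (l : ℝ) ^ (-(3/2) : ℝ) * (l * l) = (l:ℝ) ^ ((1:ℝ)/2) := by
        have : (l : ℝ) * l = (l:ℝ) ^ (2:ℝ) := by norm_cast; ring
        rw [this, ← Real.rpow_add hlp]; norm_num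
      have e2 : (l:ℝ) * l / 2 ≤ l * (l - 1) := by nlinarith
      have e3 : 0 < (l : ℝ) ^ (-(3/2) : ℝ) := by positivity
      have := mul_le_mul_of_nonneg_left e2 e3.le
      linarith
    calc ((n !).factorization l : ℝ) * Real.log l ≤ n / (l - 1) * Real.log l :=
          mul_le_mul_of_nonneg_right h3 hlog
      _ = (n:ℝ) * (Real.log l / l) + n * (Real.log l / (l * (l - 1))) := by
          have : (l:ℝ) - 1 ≠ 0 := by linarith
          field_simp; ring
      _ ≤ _ := by gcongr
  rw [Finset.sum_add_distrib, ← Finset.mul_sum, ← Finset.mul_sum] at h2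
  have h3 : ∑ l ∈ Nat.primesLE n, 4 * (l : ℝ) ^ (-(3/2) : ℝ) ≤ ∑' n : ℕ, 4 * (n : ℝ) ^ (-(3/2) : ℝ) :=
    hsum.sum_le_tsum _ (fun i _ => by positivity)
  have h4 := mul_le_mul_of_nonneg_left h3 hn'.le
  refine le_of_mul_le_mul_left ?_ hn'
  linarith

/-- partial sum of prime reciprocals -/
lemma prime_recip_piece : ∃ C : ℝ, 0 ≤ C ∧ ∀ x y : ℝ, 1 < x → x ≤ y →
    (∑ l ∈ Nat.primesLE ⌊y⌋₊, (1:ℝ) / l) - (∑ l ∈ Nat.primesLE ⌊x⌋₊, (1:ℝ) / l) ≤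
      (Real.log y - Real.log x + C) / Real.log x := by
  obtain ⟨C, hC0, hC⟩ := mertens_lower
  refine ⟨C + Real.log 2 + Real.log 4, by have := Real.log_nonneg (x := 2) (by norm_num); have := Real.log_nonneg (x := 4) (by norm_num); linarith, fun x y hx hxy => ?_⟩
  have hlx : 0 < Real.log x := Real.log_pos hx
  have hsub : Nat.primesLE ⌊x⌋₊ ⊆ Nat.primesLE ⌊y⌋₊ := by
    intro l hl
    rw [Nat.mem_primesLE] at hl ⊢
    exact ⟨hl.1.trans (Nat.floor_mono hxy), hl.2⟩
  have hfx : 1 ≤ ⌊x⌋₊ := Nat.one_le_floor_iff x |>.2 hx.le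
  have hfy : 1 ≤ ⌊y⌋₊ := Nat.one_le_floor_iff y |>.2 (hx.le.trans hxy)
  have hxf : Real.log x - Real.log 2 ≤ Real.log ⌊x⌋₊ := by
    have hfx' : (1:ℝ) ≤ ⌊x⌋₊ := by exact_mod_cast hfx
    rw [← Real.log_div (by linarith) (by norm_num)]
    apply Real.log_le_log (by linarith)
    have := Nat.lt_floor_add_one x
    linarith
  have hyf : Real.log ⌊y⌋₊ ≤ Real.log y :=
    Real.log_le_log (by exact_mod_cast hfy) (Nat.floor_le (by linarith))
  have h1 := hC _ hfx
  have h2 := mertens_upper _ hfy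
  rw [← Finset.sum_sdiff hsub, add_sub_cancel_right, le_div_iff₀ hlx, Finset.sum_mul]
  rw [← Finset.sum_sdiff hsub] at h2
  have h3 : ∑ l ∈ Nat.primesLE ⌊y⌋₊ \ Nat.primesLE ⌊x⌋₊, (1:ℝ) / l * Real.log x ≤
      ∑ l ∈ Nat.primesLE ⌊y⌋₊ \ Nat.primesLE ⌊x⌋₊, Real.log l / l := by
    apply Finset.sum_le_sum
    intro l hl
    rw [Finset.mem_sdiff, Nat.mem_primesLE, Nat.mem_primesLE] at hl
    have hlp : (0:ℝ) < l := by exact_mod_cast hl.1.2.pos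
    have hxl : x < l := by
      by_contra h
      push Not at h
      exact hl.2 ⟨Nat.le_floor h, hl.1.2⟩
    rw [div_mul_eq_mul_div, one_mul]
    gcongr
  linarith

lemma prime_recip_bound (κ : ℝ) (hκ : Real.exp (-(1/2)) < κ) (hκ1 : κ < 1) :
    ∃ η : ℝ, 0 < η ∧ ∃ N0 : ℕ, ∀ N : ℕ, N0 ≤ N →
      (∑ l ∈ Nat.primesLE N, (1:ℝ) / l) - (∑ l ∈ Nat.primesLE ⌊(N : ℝ) ^ κ⌋₊, (1:ℝ) / l) ≤
        1 / 2 - η := by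
  obtain ⟨C, hC0, hC⟩ := prime_recip_piece
  have hκ0 : 0 < κ := (Real.exp_pos _).trans hκ
  set L := -Real.log κ with hL
  have hL0 : 0 < L := by have := Real.log_neg hκ0 hκ1; linarith
  have hL1 : L < 1/2 := by
    have := (Real.lt_log_iff_exp_lt hκ0).2 hκ
    linarith
  set η := (1/2 - L) / 2 with hη
  have hη0 : 0 < η := by linarith
  obtain ⟨K, hK⟩ := exists_nat_gt (max 1 (2 / η))
  have hK1 : (1:ℝ) < K := (le_max_left _ _).trans_lt hK
  have hK2 : 2 / η < K := (le_max_right _ _).trans_lt hK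
  have hKpos : (0:ℝ) < K := by linarith
  have hL2 : L ^ 2 / K ≤ η / 2 := by
    rw [div_lt_iff₀ hη0] at hK2
    rw [div_le_iff₀ hKpos]
    nlinarith
  obtain ⟨N0, hN0⟩ := exists_nat_gt (Real.exp (max 1 (2 * K * C / (κ * η))))
  refine ⟨η, hη0, N0, fun N hN => ?_⟩
  have hNN : Real.exp (max 1 (2 * K * C / (κ * η))) < N := hN0.trans_le (by exact_mod_cast hN)
  have hNpos : (0:ℝ) < N := (Real.exp_pos _).trans hNN
  have hlog := (Real.lt_log_iff_exp_lt hNpos).2 hNN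
  have hl1 : 1 < Real.log N := (le_max_left _ _).trans_lt hlog
  have hl2 : 2 * K * C / (κ * η) < Real.log N := (le_max_right _ _).trans_lt hlog
  set G : ℝ → ℝ := fun y => ∑ l ∈ Nat.primesLE ⌊y⌋₊, (1:ℝ) / l with hG
  set X : ℕ → ℝ := fun i => Real.exp (Real.log N * (κ * Real.exp (i * (L / K)))) with hX
  have hX0 : X 0 = (N:ℝ) ^ κ := by
    simp only [hX, Nat.cast_zero, zero_mul, Real.exp_zero, mul_one]
    rw [Real.rpow_def_of_pos hNpos]
  have hXK : X K = N := by
    simp only [hX]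
    have e1 : (K:ℝ) * (L / K) = L := by field_simp
    rw [e1, hL, Real.exp_neg, Real.exp_log hκ0, mul_inv_cancel₀ hκ0.ne', mul_one, Real.exp_log hNpos]
  have hpiece : ∀ i : ℕ, G (X (i+1)) - G (X i) ≤ L / K + (L/K)^2 + C / (κ * Real.log N) := by
    intro i
    have hEi : 1 ≤ Real.exp (i * (L / K)) := Real.one_le_exp (by positivity)
    have hpos : 0 < Real.log N * (κ * Real.exp (i * (L / K))) := by positivity
    have hlX : Real.log (X i) = Real.log N * (κ * Real.exp (i * (L / K))) := Real.log_exp _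
    have hlX' : Real.log (X (i+1)) = Real.log N * (κ * Real.exp (i * (L / K))) * Real.exp (L/K) := by
      simp only [hX]
      rw [Real.log_exp, mul_assoc, mul_assoc, ← Real.exp_add]
      congr 4; push_cast; ring
    have h1 : 1 < X i := Real.one_lt_exp_iff.2 hpos
    have hE1 : 1 ≤ Real.exp (L / K) := Real.one_le_exp (by positivity)
    have h2 : X i ≤ X (i+1) := by
      rw [← Real.log_le_log_iff (by linarith) (Real.exp_pos _), hlX, hlX']
      nlinarith
    have h3 := hC (X i) (X (i+1)) h1 h2
    refine h3.trans ?_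
    rw [hlX, hlX', add_div]
    have ht1 : L / K ≤ 1 := by
      rw [div_le_one hKpos]; linarith
    have h4 : Real.exp (L/K) - 1 ≤ L/K + (L/K)^2 := by
      have := Real.abs_exp_sub_one_sub_id_le (x := L / K) (by rw [abs_of_nonneg (by positivity)]; exact ht1)
      have := (abs_le.1 this).2
      linarith
    have h5 : (Real.log N * (κ * Real.exp (i * (L / K))) * Real.exp (L/K) -
      Real.log N * (κ * Real.exp (i * (L / K)))) / (Real.log N * (κ * Real.exp (i * (L / K)))) =
      Real.exp (L/K) - 1 := by
      field_simp
    rw [h5]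
    have h6 : C / (Real.log N * (κ * Real.exp (i * (L / K)))) ≤ C / (κ * Real.log N) := by
      apply div_le_div_of_nonneg_left hC0 (by positivity)
      have : 0 < κ * Real.log N := by positivity
      nlinarith
    linarith
  have htel : G (X K) - G (X 0) ≤ K * (L / K + (L/K)^2 + C / (κ * Real.log N)) := by
    rw [← Finset.sum_range_sub (fun i => G (X i)) K]
    refine (Finset.sum_le_sum (fun i _ => hpiece i)).trans ?_
    rw [Finset.sum_const, Finset.card_range, nsmul_eq_mul]
  rw [hXK, hX0] at htel
  have e : K * (L / K + (L/K)^2 + C / (κ * Real.log N)) = L + L^2 / K + K * C / (κ * Real.log N) := by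
    field_simp
  have hlast : K * C / (κ * Real.log N) ≤ η / 2 := by
    rw [div_lt_iff₀ (by positivity)] at hl2
    rw [div_le_iff₀ (by positivity)]
    nlinarith
  simp only [hG, Nat.floor_natCast] at htel
  linarith
end SG
end

section
namespace SG
lemma char_lower (κ : ℝ) (hκ : Real.exp (-(1/2)) < κ) (hκ1 : κ < 1) :
    ∃ η : ℝ, 0 < η ∧ ∃ N0 : ℕ, ∀ N : ℕ, N0 ≤ N → ∀ (p : ℕ) [Fact p.Prime]
      (χ : MulChar (ZMod p) ℂ), (∀ m : ℕ, 1 ≤ m → (m : ℝ) ≤ (N : ℝ) ^ κ → χ (m : ZMod p) = 1) →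
      2 * η * N ≤ ∑ n ∈ Finset.range N, (χ ((n + 1 : ℕ) : ZMod p)).re := by
  obtain ⟨η, hη, N0, h⟩ := prime_recip_bound κ hκ hκ1
  refine ⟨η, hη, max N0 1, fun N hN p _ χ hχ => ?_⟩
  have hN1 : 1 ≤ N := (le_max_right _ _).trans hN
  have h := h N ((le_max_left _ _).trans hN)
  have hNκ : (N : ℝ) ^ κ ≤ N := by
    calc (N:ℝ) ^ κ ≤ (N:ℝ) ^ (1:ℝ) :=
          Real.rpow_le_rpow_of_exponent_le (by exact_mod_cast hN1) hκ1.le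
      _ = N := Real.rpow_one _
  have hfl : ⌊(N : ℝ) ^ κ⌋₊ ≤ N := Nat.floor_le_of_le hNκ
  have hsub : Nat.primesLE ⌊(N : ℝ) ^ κ⌋₊ ⊆ Nat.primesLE N := by
    intro l hl
    rw [Nat.mem_primesLE] at hl ⊢
    exact ⟨hl.1.trans hfl, hl.2⟩
  rw [← Finset.sum_sdiff hsub, add_sub_cancel_right] at h
  set D := Nat.primesLE N \ Nat.primesLE ⌊(N : ℝ) ^ κ⌋₊ with hD
  have hsm : ∀ m : ℕ, 1 ≤ m → (∀ l : ℕ, l.Prime → l ∣ m → (l:ℝ) ≤ (N:ℝ)^κ) →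
      χ (m : ZMod p) = 1 := by
    intro m
    induction m using Nat.recOnMul with
    | zero => intro h; omega
    | one => intro _ _; simp
    | prime l hl => intro _ h; exact hχ l hl.one_le (h l hl dvd_rfl)
    | mul a b iha ihb =>
      intro h1 h2
      have ha : 1 ≤ a := Nat.pos_of_ne_zero (by rintro rfl; simp at h1)
      have hb : 1 ≤ b := Nat.pos_of_ne_zero (by rintro rfl; simp at h1)
      rw [Nat.cast_mul, map_mul, iha ha (fun l hl hd => h2 l hl (hd.mul_right _)),
        ihb hb (fun l hl hd => h2 l hl (hd.mul_left _)), one_mul]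
  have hterm : ∀ n ∈ Finset.range N, 1 - 2 * ∑ l ∈ D, (if l ∣ n + 1 then (1:ℝ) else 0) ≤
      (χ ((n + 1 : ℕ) : ZMod p)).re := by
    intro n hn
    rw [Finset.mem_range] at hn
    by_cases hex : ∃ l ∈ D, l ∣ n + 1
    · obtain ⟨l, hl, hd⟩ := hex
      have h1 : (1:ℝ) ≤ ∑ l ∈ D, (if l ∣ n + 1 then (1:ℝ) else 0) := by
        have := Finset.single_le_sum (f := fun l => (if l ∣ n + 1 then (1:ℝ) else 0))
          (s := D) (fun i _ => by positivity) hl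
        simpa [hd] using this
      have h2 := (abs_le.1 ((Complex.abs_re_le_norm (χ ((n + 1 : ℕ) : ZMod p))).trans
        (char_norm_le χ _))).1
      linarith
    · push Not at hex
      rw [hsm (n+1) (by omega), Finset.sum_eq_zero]
      · simp
      · intro l hl; rw [if_neg (hex l hl)]
      · intro l hl hd
        by_contra hlt
        refine hex l ?_ hd
        rw [hD, Finset.mem_sdiff, Nat.mem_primesLE, Nat.mem_primesLE]
        refine ⟨⟨(Nat.le_of_dvd (by omega) hd).trans (by omega), hl⟩, fun h3 => hlt ?_⟩
        exact (Nat.le_floor_iff (by positivity)).1 h3.1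
  refine le_trans ?_ (Finset.sum_le_sum hterm)
  rw [Finset.sum_sub_distrib, ← Finset.mul_sum, Finset.sum_comm]
  have h3 : ∑ l ∈ D, ∑ n ∈ Finset.range N, (if l ∣ n + 1 then (1:ℝ) else 0) ≤
      ∑ l ∈ D, (N:ℝ) * (1 / l) := by
    apply Finset.sum_le_sum
    intro l _
    rw [Finset.sum_boole, Nat.card_multiples]
    refine Nat.cast_div_le.trans (le_of_eq (by ring))
  rw [← Finset.mul_sum] at h3
  have h4 := mul_le_mul_of_nonneg_left h (Nat.cast_nonneg (α := ℝ) N)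
  simp only [Finset.sum_const, Finset.card_range, nsmul_eq_mul, mul_one]
  linarith
end SG
end

section
namespace SG
open Filter in
lemma ev_pow (C a b : ℝ) (hab : a < b) : ∀ᶠ p : ℕ in atTop, C * (p:ℝ) ^ a ≤ (p:ℝ) ^ b := by
  have h : Tendsto (fun p : ℕ => (p:ℝ) ^ (b - a)) atTop atTop :=
    (tendsto_rpow_atTop (by linarith)).comp tendsto_natCast_atTop_atTop
  filter_upwards [h.eventually_ge_atTop C, eventually_gt_atTop 0] with p hp hp0
  have hp0' : (0:ℝ) < p := by exact_mod_cast hp0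
  calc C * (p:ℝ)^a ≤ (p:ℝ)^(b-a) * (p:ℝ)^a := by gcongr
    _ = (p:ℝ)^b := by rw [← Real.rpow_add hp0']; congr 1; ring

open Filter in
lemma ev_pi (c δ : ℝ) (h0 : 0 < δ) (h1 : δ < 1) :
    ∀ᶠ n : ℕ in atTop, (n:ℝ) ^ (1 - δ) + c ≤ (Nat.primeCounting n : ℝ) := by
  have hl : ∀ᶠ n : ℕ in atTop, ‖Real.log n‖ ≤ (1/8) * ‖(n:ℝ)^δ‖ :=
    tendsto_natCast_atTop_atTop.eventually
      ((isLittleO_log_rpow_atTop h0).bound (by norm_num : (0:ℝ) < 1/8))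
  filter_upwards [hl, ev_pow c 0 (1-δ) (by linarith), eventually_ge_atTop 10] with n hn hc hn10
  have hn' : (10:ℝ) ≤ n := by exact_mod_cast hn10
  have hn0 : (0:ℝ) < n := by linarith
  have hlog : 0 < Real.log n := Real.log_pos (by linarith)
  rw [Real.rpow_zero, mul_one] at hc
  rw [Real.norm_of_nonneg hlog.le, Real.norm_of_nonneg (by positivity)] at hn
  have hnδ : (n:ℝ)^δ ≤ n := by
    calc (n:ℝ)^δ ≤ (n:ℝ)^(1:ℝ) := Real.rpow_le_rpow_of_exponent_le (by linarith) h1.le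
      _ = n := Real.rpow_one _
  have h2 : Real.log (n+1) ≤ Real.log n + 0.7 := by
    have : Real.log (n+1) ≤ Real.log (n * 2) := Real.log_le_log (by linarith) (by linarith)
    rw [Real.log_mul hn0.ne' (by norm_num)] at this
    have := Real.log_two_lt_d9
    linarith
  have h3 := Chebyshev.pi_ge n
  have h4 := Real.log_two_gt_d9
  have h5 : (n:ℝ)/4 ≤ n * Real.log 2 - Real.log (n+1) := by nlinarith
  have h6 : 2 * (n:ℝ)^(1-δ) ≤ (n * Real.log 2 - Real.log (n+1)) / Real.log n := by
    rw [le_div_iff₀ hlog]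
    refine le_trans ?_ h5
    have e : (n:ℝ)^(1-δ) * (n:ℝ)^δ = n := by rw [← Real.rpow_add hn0]; simp
    have := mul_le_mul_of_nonneg_left hn (by positivity : 0 ≤ (n:ℝ)^(1-δ))
    nlinarith
  linarith

lemma choose_le {p g n k : ℕ} [Fact p.Prime] (hg : 0 < g) (hn : n ^ k < p)
    (h : ∀ m : ℕ, 1 ≤ m → m ≤ n → ((m : ZMod p)) ^ g = 1) :
    (Nat.primeCounting n).choose k ≤ g := by
  classical
  rw [← Nat.primesLE_card_eq_primeCounting, ← Finset.card_powersetCard]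
  refine le_trans ?_ (Polynomial.card_nthRoots g (1 : ZMod p))
  refine le_trans ?_ (Multiset.toFinset_card_le _)
  have hle : ∀ s ∈ Finset.powersetCard k (Nat.primesLE n), ∏ i ∈ s, i < p := by
    intro s hs
    rw [Finset.mem_powersetCard] at hs
    refine lt_of_le_of_lt ?_ hn
    rw [← hs.2]
    exact Finset.prod_le_pow_card _ _ _ (fun i hi => ((Nat.mem_primesLE).1 (hs.1 hi)).1)
  apply Finset.card_le_card_of_injOn (fun s => ((∏ i ∈ s, i : ℕ) : ZMod p))
  · intro s hs
    have hs' := (Finset.mem_powersetCard.1 hs).1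
    simp only [Finset.mem_coe, Multiset.mem_toFinset]
    rw [Polynomial.mem_nthRoots hg]
    rw [Nat.cast_prod, ← Finset.prod_pow]
    apply Finset.prod_eq_one
    intro i hi
    have := (Nat.mem_primesLE).1 (hs' hi)
    exact h i this.2.one_le this.1
  · intro s hs t ht hst
    simp only at hst
    rw [ZMod.natCast_eq_natCast_iff'] at hst
    rw [Nat.mod_eq_of_lt (hle s hs), Nat.mod_eq_of_lt (hle t ht)] at hst
    rw [← Nat.primeFactors_prod (s := s) (fun i hi => ((Nat.mem_primesLE).1 ((Finset.mem_powersetCard.1 hs).1 hi)).2),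
      ← Nat.primeFactors_prod (s := t) (fun i hi => ((Nat.mem_primesLE).1 ((Finset.mem_powersetCard.1 ht).1 hi)).2), hst]

open Filter in
lemma q_bound (δ : ℝ) (h0 : 0 < δ) (h1 : δ < 1) : ∀ᶠ p : ℕ in atTop, p.Prime → ∀ q g : ℕ,
    q * g + 1 = p → (∀ m : ℕ, 1 ≤ m → (m:ℝ) ≤ (p:ℝ) ^ ((1:ℝ)/7) → (m : ZMod p) ^ g = 1) →
    (q:ℝ) ≤ (p:ℝ) ^ δ := by
  have hfl : Tendsto (fun p : ℕ => ⌊(p:ℝ) ^ ((1:ℝ)/7)⌋₊) atTop atTop :=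
    tendsto_nat_floor_atTop.comp
      ((tendsto_rpow_atTop (by norm_num)).comp tendsto_natCast_atTop_atTop)
  filter_upwards [hfl.eventually (ev_pi 6 (δ/2) (by linarith) (by linarith)),
    hfl.eventually_ge_atTop 1,
    ev_pow (128 * 5040) (δ/2) δ (by linarith)] with p hpi hn1 hC hp q g hqg hm
  have : Fact p.Prime := ⟨hp⟩
  set n := ⌊(p:ℝ) ^ ((1:ℝ)/7)⌋₊ with hn
  have hp0 : (0:ℝ) < p := by exact_mod_cast hp.pos
  have hnle : (n:ℝ) ≤ (p:ℝ) ^ ((1:ℝ)/7) := Nat.floor_le (by positivity)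
  have hn1' : (1:ℝ) ≤ n := by exact_mod_cast hn1
  have hnge : (p:ℝ) ^ ((1:ℝ)/7) / 2 ≤ n := by
    have := Nat.lt_floor_add_one ((p:ℝ) ^ ((1:ℝ)/7))
    rw [← hn] at this
    linarith
  have hn7 : n ^ 7 < p := by
    have h7 : ((n:ℝ)) ^ 7 ≤ p := by
      calc (n:ℝ)^7 ≤ ((p:ℝ) ^ ((1:ℝ)/7))^7 := by gcongr
        _ = (p:ℝ) := by rw [← Real.rpow_natCast, ← Real.rpow_mul hp0.le]; norm_num
    have h7' : n ^ 7 ≤ p := by exact_mod_cast h7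
    refine lt_of_le_of_ne h7' (fun h => ?_)
    exact Nat.Prime.not_prime_pow (x := n) (n := 7) (by norm_num) (h ▸ hp)
  have hg : 0 < g := Nat.pos_of_ne_zero (by rintro rfl; simp at hqg; exact hp.one_lt.ne hqg)
  have hch := choose_le hg hn7 (fun m h1 h2 => hm m h1 (le_trans (by exact_mod_cast h2) hnle))
  have h3 := Nat.pow_sub_le_descFactorial (Nat.primeCounting n) 7
  rw [Nat.descFactorial_eq_factorial_mul_choose] at h3
  have h4 : (n:ℝ)^(1-δ/2) ≤ ((Nat.primeCounting n + 1 - 7 : ℕ) : ℝ) := by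
    have h6 : 6 ≤ Nat.primeCounting n := by
      have : (6:ℝ) ≤ Nat.primeCounting n := by
        have : 0 ≤ (n:ℝ)^(1-δ/2) := by positivity
        linarith
      exact_mod_cast this
    have : Nat.primeCounting n + 1 - 7 = Nat.primeCounting n - 6 := by omega
    rw [this, Nat.cast_sub h6]
    push_cast; linarith
  have h5 : ((n:ℝ)^(1-δ/2))^7 ≤ 5040 * g := by
    calc ((n:ℝ)^(1-δ/2))^7 ≤ (((Nat.primeCounting n + 1 - 7 : ℕ) : ℝ))^7 := by gcongr
      _ ≤ ((Nat.factorial 7 * (Nat.primeCounting n).choose 7 : ℕ) : ℝ) := by exact_mod_cast h3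
      _ ≤ ((Nat.factorial 7 * g : ℕ) : ℝ) := by exact_mod_cast Nat.mul_le_mul_left _ hch
      _ = 5040 * g := by rw [Nat.cast_mul]; norm_num [Nat.factorial]
  have h6 : (p:ℝ)^(1-δ/2) / 128 ≤ ((n:ℝ)^(1-δ/2))^7 := by
    calc (p:ℝ)^(1-δ/2) / 128 ≤ (p:ℝ)^(1-δ/2) / ((2:ℝ)^(1-δ/2))^7 := by
          gcongr
          calc ((2:ℝ)^(1-δ/2))^7 ≤ ((2:ℝ)^(1:ℝ))^7 := by
                gcongr
                · norm_num
                · linarith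
            _ = 128 := by norm_num
      _ = (((p:ℝ) ^ ((1:ℝ)/7) / 2)^(1-δ/2))^7 := by
          rw [Real.div_rpow (by positivity) (by norm_num), div_pow]
          congr 1
          rw [← Real.rpow_natCast, ← Real.rpow_mul hp0.le, ← Real.rpow_mul hp0.le]
          congr 1; push_cast; ring
      _ ≤ _ := by
          gcongr
          linarith
  have h7 : (q:ℝ) * g ≤ p := by
    have : q * g ≤ p := by omega
    exact_mod_cast this
  have hg0 : (0:ℝ) < g := by exact_mod_cast hg
  have e : (p:ℝ)^(1-δ/2) * (p:ℝ)^(δ/2) = p := by rw [← Real.rpow_add hp0]; simp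
  refine le_trans ?_ hC
  refine le_of_mul_le_mul_right ?_ hg0
  refine h7.trans ?_
  have h8 : (p:ℝ)^(1-δ/2) ≤ 128 * (5040 * g) := by linarith
  have := mul_le_mul_of_nonneg_right h8 (by positivity : 0 ≤ (p:ℝ)^(δ/2))
  rw [e] at this
  linarith
end SG
end

section
namespace SG
lemma exists_char {p q g : ℕ} [Fact p.Prime] (hq : q.Prime) (hg : q * g + 1 = p) :
    ∃ χ : MulChar (ZMod p) ℂ, orderOf χ = q ∧ ∀ z : ZMod p, z ^ g = 1 → χ z = 1 := by
  have hp : p.Prime := Fact.out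
  have hg0 : 0 < g := Nat.pos_of_ne_zero (by rintro rfl; simp at hg; exact hp.one_lt.ne hg)
  have hd : q ∣ Fintype.card (ZMod p) - 1 := by
    rw [ZMod.card]; exact ⟨g, by omega⟩
  obtain ⟨χ, hχ⟩ := MulChar.exists_mulChar_orderOf (ZMod p) hd
    (Complex.isPrimitiveRoot_exp q hq.ne_zero)
  refine ⟨χ, hχ, fun z hz => ?_⟩
  have hz0 : z ≠ 0 := by
    rintro rfl
    rw [zero_pow hg0.ne'] at hz
    exact zero_ne_one hz
  obtain ⟨ζ, hζ⟩ := IsCyclic.exists_generator (α := (ZMod p)ˣ)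
  obtain ⟨k, hk⟩ := (Submonoid.mem_powers_iff _ _).1
    ((mem_powers_iff_mem_zpowers).2 (hζ (Units.mk0 z hz0)))
  have ho : orderOf ζ = q * g := by
    rw [orderOf_eq_card_of_forall_mem_zpowers hζ, Nat.card_eq_fintype_card, ZMod.card_units p]
    omega
  have h1 : ζ ^ (k * g) = 1 := by
    rw [pow_mul, hk]
    ext; simpa using hz
  have h2 := orderOf_dvd_of_pow_eq_one h1
  rw [ho] at h2
  obtain ⟨j, rfl⟩ := Nat.dvd_of_mul_dvd_mul_right hg0 h2
  have h3 : z = ((ζ : ZMod p) ^ j) ^ q := by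
    have := congrArg (Units.val) hk
    rw [Units.val_mk0, Units.val_pow_eq_pow_val] at this
    rw [← this, ← pow_mul, mul_comm]
  have hu : IsUnit ((ζ : ZMod p) ^ j) := (ζ ^ j).isUnit
  rw [h3, map_pow, ← MulChar.pow_apply' _ hq.ne_zero, ← hχ, pow_orderOf_eq_one,
    MulChar.one_apply hu]

lemma aux_cancel (c X Y : ℝ) (hc : c ≠ 0) : c * (4 / c * X * Y) = 4 * (X * Y) := by
  field_simp

set_option maxHeartbeats 4000000 in
open Filter in
lemma nonres (ε : ℝ) (h0 : 0 < ε) (h1 : ε ≤ 1/100) : ∀ᶠ p : ℕ in atTop, p.Prime → ∀ q g : ℕ,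
    q.Prime → q * g + 1 = p → ∃ m : ℕ, 1 ≤ m ∧
      (m:ℝ) ≤ (p:ℝ) ^ (1 / (4 * Real.sqrt (Real.exp 1)) + ε) ∧ (m : ZMod p) ^ g ≠ 1 := by
  have hs : Real.sqrt (Real.exp 1) = Real.exp (1/2) := (Real.exp_half 1).symm
  have hs1 : Real.sqrt (Real.exp 1) ≤ 1.7 := by
    rw [Real.sqrt_le_left (by norm_num)]
    have := Real.exp_one_lt_d9
    norm_num; linarith
  have hs2 : 1.6 ≤ Real.sqrt (Real.exp 1) := by
    apply Real.le_sqrt_of_sq_le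
    have := Real.exp_one_gt_d9
    norm_num; linarith
  have hs0 : 0 < Real.sqrt (Real.exp 1) := by linarith
  set τ := 1 / (4 * Real.sqrt (Real.exp 1)) with hτ
  have hτ7 : 1/7 ≤ τ := by
    rw [hτ]; apply one_div_le_one_div_of_le (by linarith); linarith
  have hτe : 4 * τ = Real.exp (-(1/2)) := by
    rw [Real.exp_neg, ← hs, hτ]; field_simp
  have hτ1 : τ ≤ 1/6.4 := by
    rw [hτ]; apply one_div_le_one_div_of_le (by norm_num); linarith
  set κ := 4 * τ + ε with hκ
  have hκ1 : κ < 1 := by norm_num at hτ1; linarith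
  have hκ0 : 0 < κ := by linarith
  set δ := ε / 2 with hδ
  obtain ⟨η, hη, N0, hlow⟩ := char_lower κ (by linarith) hκ1
  obtain ⟨r, hr⟩ := exists_nat_gt (4 / δ)
  have hδ0 : 0 < δ := by linarith
  have hr0 : (0:ℝ) < r := lt_trans (by positivity) hr
  have hr1 : (1:ℝ) ≤ r := by exact_mod_cast (Nat.pos_of_ne_zero (by rintro rfl; simp at hr0))
  set β := 1 / (2 * (r:ℝ)) with hβ
  have hβ0 : 0 < β := by positivity
  have hβδ : β ≤ δ / 8 := by
    rw [div_lt_iff₀ hδ0] at hr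
    rw [hβ, div_le_iff₀ (by positivity)]
    linarith
  -- floor tendsto
  have htop : ∀ a : ℝ, 0 < a → Tendsto (fun p : ℕ => (p:ℝ) ^ a) atTop atTop := fun a ha =>
    (tendsto_rpow_atTop ha).comp tendsto_natCast_atTop_atTop
  -- A tends to infinity
  have hApi : ∀ᶠ x : ℝ in atTop, ∀ n : ℕ, x ≤ n →
      (n:ℝ) ^ (1 - β) + ⌈4 / η⌉₊ ≤ (Nat.primeCounting n : ℝ) := by
    obtain ⟨M, hM⟩ := eventually_atTop.1 (ev_pi ⌈4 / η⌉₊ β hβ0 (by linarith))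
    filter_upwards [eventually_ge_atTop (M:ℝ)] with x hx n hn
    exact hM n (by exact_mod_cast hx.trans hn)
  set c := (η / 4) * (η / 2) ^ (2 * r) with hc
  have hc0 : 0 < c := by positivity
  filter_upwards [q_bound β hβ0 (by linarith), eventually_ge_atTop 2,
    (htop (1/4+δ) (by linarith)).eventually_ge_atTop (N0 + 1 : ℝ),
    (htop (1/4+δ-2*β) (by linarith)).eventually hApi,
    (htop β hβ0).eventually_ge_atTop (16 / η),
    (htop (1/4+δ-2*β) (by linarith)).eventually_ge_atTop 1,
    ev_pow (100 * r ^ 2) (4 * β) 1 (by linarith),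
    ev_pow η (1/2+2*δ) 1 (by linarith),
    ev_pow 3 β 1 (by linarith),
    ev_pow (4 / c * (r ^ (2 * r) + 20 * r)) (1/2 + 2 * β) (1/2 + 2 * δ - 3 * β) (by linarith)]
    with p hqb hp2 hN0 hAp hAη hA1 hsz hAN hB3 hfin hp q g hq hqg
  have : Fact p.Prime := ⟨hp⟩
  have hp0 : (0:ℝ) < p := by exact_mod_cast hp.pos
  have hp1 : (1:ℝ) ≤ p := by exact_mod_cast hp.one_le
  by_contra hcon
  push Not at hcon
  have hqβ := hqb hp q g hqg (fun m hm1 hm2 => hcon m hm1 (hm2.trans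
    (Real.rpow_le_rpow_of_exponent_le hp1 (by linarith))))
  obtain ⟨χ, hχ, hχ1⟩ := exists_char hq hqg
  set N := ⌊(p:ℝ)^(1/4+δ)⌋₊ with hN
  have hNle : (N:ℝ) ≤ (p:ℝ)^(1/4+δ) := Nat.floor_le (by positivity)
  have hNlt : (p:ℝ)^(1/4+δ) < N + 1 := Nat.lt_floor_add_one _
  have hNN0 : N0 + 1 ≤ N := Nat.le_floor (by exact_mod_cast hN0)
  have hN1 : 1 ≤ N := by omega
  have hN1' : (1:ℝ) ≤ N := by exact_mod_cast hN1
  have hNge : (p:ℝ)^(1/4+δ) / 2 ≤ N := by linarith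
  have hsum := hlow N (by omega) p χ (fun m hm1 hm2 => hχ1 _ (hcon m hm1 (by
    refine hm2.trans ?_
    calc (N:ℝ)^κ ≤ ((p:ℝ)^(1/4+δ))^κ := by gcongr
      _ = (p:ℝ)^((1/4+δ)*κ) := by rw [← Real.rpow_mul hp0.le]
      _ ≤ _ := by
        apply Real.rpow_le_rpow_of_exponent_le hp1
        nlinarith)))
  set B := ⌊(p:ℝ)^β⌋₊ + 1 with hB
  have hpβ1 : 1 ≤ (p:ℝ)^β := Real.one_le_rpow hp1 hβ0.le
  have hBge : (p:ℝ)^β ≤ B := by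
    rw [hB]; push_cast; exact (Nat.lt_floor_add_one _).le
  have hBle : (B:ℝ) ≤ 2 * (p:ℝ)^β := by
    have := Nat.floor_le (by positivity : 0 ≤ (p:ℝ)^β)
    rw [hB]; push_cast; linarith
  have hBpos : (0:ℝ) < B := by linarith
  have hBp : B < p := by
    rw [Real.rpow_one] at hB3
    have : (B:ℝ) < p := by linarith
    exact_mod_cast this
  set A := ⌊η * N / (2 * B)⌋₊ with hA
  have hAle : (A:ℝ) ≤ η * N / (2 * B) := Nat.floor_le (by positivity)
  have hAB : 2 * ((A:ℝ) * B) ≤ η * N := by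
    rw [le_div_iff₀ (by positivity)] at hAle; linarith
  have hAN' : A * N < p := by
    have hB1 : (1:ℝ) ≤ B := by linarith
    have hA0 : (0:ℝ) ≤ A := by positivity
    have h2 : 2 * (A:ℝ) ≤ η * N := by
      have := le_mul_of_one_le_right hA0 hB1
      linarith
    have h3 : (N:ℝ) * N ≤ (p:ℝ)^(1/2+2*δ) := by
      calc (N:ℝ) * N ≤ (p:ℝ)^(1/4+δ) * (p:ℝ)^(1/4+δ) := by gcongr
        _ = _ := by rw [← Real.rpow_add hp0]; congr 1; ring
    have h4 := mul_le_mul_of_nonneg_left h3 hη.le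
    rw [Real.rpow_one] at hAN
    have h6 := mul_le_mul_of_nonneg_right h2 (by linarith : (0:ℝ) ≤ N)
    have h7 : η * ((N:ℝ) * N) ≤ p := h4.trans hAN
    have h8 : 2 * ((A:ℝ) * N) ≤ p := by
      calc 2 * ((A:ℝ) * N) = 2 * A * N := by ring
        _ ≤ η * N * N := h6
        _ = η * ((N:ℝ) * N) := by ring
        _ ≤ p := h7
    have h5 : (A:ℝ) * N < p := by linarith only [h8, hp0]
    exact_mod_cast h5
  have hAge : (p:ℝ)^(1/4+δ-2*β) ≤ A := by
    have h2 : (p:ℝ)^(1/4+δ-2*β) * 2 ≤ η * N / (2 * B) := by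
      rw [le_div_iff₀ (by positivity)]
      have e : (p:ℝ)^(1/4+δ-2*β) * (p:ℝ)^β * (p:ℝ)^β = (p:ℝ)^(1/4+δ) := by
        rw [← Real.rpow_add hp0, ← Real.rpow_add hp0]; congr 1; ring
      rw [div_le_iff₀ hη] at hAη
      calc (p:ℝ)^(1/4+δ-2*β) * 2 * (2 * B) ≤ (p:ℝ)^(1/4+δ-2*β) * 2 * (2 * (2 * (p:ℝ)^β)) := by gcongr
        _ = (p:ℝ)^(1/4+δ-2*β) * (p:ℝ)^β / 2 * 16 := by ring
        _ ≤ (p:ℝ)^(1/4+δ-2*β) * (p:ℝ)^β / 2 * ((p:ℝ)^β * η) := by gcongr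
        _ = η * ((p:ℝ)^(1/4+δ) / 2) := by rw [← e]; ring
        _ ≤ _ := by gcongr
    have h3 := Nat.lt_floor_add_one (η * N / (2 * B))
    rw [← hA] at h3
    linarith
  set As := (Nat.primesLE A).filter (fun a : ℕ => 4 ≤ η * a) with hAs
  have hcard : (p:ℝ)^(1/4+δ-3*β) ≤ As.card := by
    have h2 := hAp A hAge
    have h3 : Nat.primeCounting A ≤ As.card + ⌈4 / η⌉₊ := by
      rw [← Nat.primesLE_card_eq_primeCounting, ← Finset.card_filter_add_card_filter_not
        (s := Nat.primesLE A) (fun a : ℕ => 4 ≤ η * a)]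
      apply Nat.add_le_add_left
      rw [← Finset.card_range ⌈4 / η⌉₊]
      apply Finset.card_le_card
      intro a ha
      rw [Finset.mem_filter, not_le] at ha
      rw [Finset.mem_range, Nat.lt_ceil, lt_div_iff₀ hη]
      linarith [ha.2]
    have h3' : (Nat.primeCounting A : ℝ) ≤ As.card + ⌈4 / η⌉₊ := by exact_mod_cast h3
    have h4 : (p:ℝ)^(1/4+δ-3*β) ≤ (A:ℝ)^(1-β) := by
      calc (p:ℝ)^(1/4+δ-3*β) ≤ (p:ℝ)^((1/4+δ-2*β)*(1-β)) := by
            apply Real.rpow_le_rpow_of_exponent_le hp1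
            nlinarith
        _ = ((p:ℝ)^(1/4+δ-2*β))^(1-β) := by rw [← Real.rpow_mul hp0.le]
        _ ≤ _ := by
          gcongr
          linarith
    linarith
  have hq1 : (1:ℝ) ≤ q := by exact_mod_cast hq.one_le
  have hq4 : (q:ℝ)^4 ≤ (p:ℝ)^(4*β) := by
    calc (q:ℝ)^4 ≤ ((p:ℝ)^β)^4 := by gcongr
      _ = _ := by rw [← Real.rpow_natCast, ← Real.rpow_mul hp0.le]; congr 1; push_cast; ring
  have hq2 : (q:ℝ)^2 ≤ (p:ℝ)^(2*β) := by
    calc (q:ℝ)^2 ≤ ((p:ℝ)^β)^2 := by gcongr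
      _ = _ := by rw [← Real.rpow_natCast, ← Real.rpow_mul hp0.le]; congr 1; push_cast; ring
  have hrq : 1 ≤ (r:ℝ) * q := by nlinarith
  have hsize : 4 * (2 * r * q + 3) ^ 2 * q ^ 2 ≤ p := by
    have : 4 * (2 * (r:ℝ) * q + 3) ^ 2 * q ^ 2 ≤ (p:ℝ) := by
      calc 4 * (2 * (r:ℝ) * q + 3) ^ 2 * (q:ℝ) ^ 2 ≤ 4 * (5 * ((r:ℝ) * q)) ^ 2 * (q:ℝ) ^ 2 := by
            gcongr; linarith
        _ = 100 * (r:ℝ) ^ 2 * (q:ℝ) ^ 4 := by ring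
        _ ≤ 100 * (r:ℝ) ^ 2 * (p:ℝ)^(4*β) := by gcongr
        _ ≤ _ := by rw [Real.rpow_one] at hsz; exact hsz
    exact_mod_cast this
  have key := burgess_step hq hqg χ hχ hsize N A B η hη hN1 hAN' hBp hAB hsum As (by
    intro a ha
    rw [hAs, Finset.mem_filter, Nat.mem_primesLE] at ha
    exact ⟨ha.1.2, ha.1.1, ha.2⟩)
  have hBr : (p:ℝ)^((1:ℝ)/2) ≤ (B:ℝ)^r := by
    calc (p:ℝ)^((1:ℝ)/2) = ((p:ℝ)^β)^r := by
          rw [← Real.rpow_natCast, ← Real.rpow_mul hp0.le]; congr 1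
          rw [hβ]; field_simp
      _ ≤ _ := by gcongr
  have hsq : Real.sqrt p = (p:ℝ)^((1:ℝ)/2) := Real.sqrt_eq_rpow _
  have hpp : (p:ℝ) = (p:ℝ)^((1:ℝ)/2) * (p:ℝ)^((1:ℝ)/2) := by
    rw [← Real.rpow_add hp0]; norm_num
  have hB2r : (B:ℝ)^(2*r) = (B:ℝ)^r * (B:ℝ)^r := by rw [two_mul, pow_add]
  have hs1' : 1 ≤ (p:ℝ)^((1:ℝ)/2) := Real.one_le_rpow hp1 (by norm_num)
  have hR1 : (B : ℝ) ^ r * r ^ (2 * r) * p ≤ (B:ℝ)^(2*r) * (r ^ (2 * r) * (p:ℝ)^(1/2+2*β)) := by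
    calc (B : ℝ) ^ r * r ^ (2 * r) * p
        = (B : ℝ) ^ r * r ^ (2 * r) * ((p:ℝ)^((1:ℝ)/2) * (p:ℝ)^((1:ℝ)/2)) := by rw [← hpp]
      _ ≤ (B : ℝ) ^ r * r ^ (2 * r) * ((B:ℝ)^r * (p:ℝ)^(1/2+2*β)) := by
          gcongr
          linarith
      _ = _ := by rw [hB2r]; ring
  have hR2 : (q * ((4 * (2 * r * q : ℕ) + 10) * Real.sqrt p) + (2 * r * q : ℕ) : ℝ) ≤
      20 * r * (p:ℝ)^(1/2+2*β) := by
    rw [hsq]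
    push_cast
    have h2 : (q:ℝ) * ((4 * (2 * r * q) + 10) * (p:ℝ)^((1:ℝ)/2)) ≤
        q * ((18 * (r * q)) * (p:ℝ)^((1:ℝ)/2)) := by
      gcongr; linarith
    have h3 : 2 * (r:ℝ) * q ≤ 2 * r * (q * q * (p:ℝ)^((1:ℝ)/2)) := by
      have h4 : (q:ℝ) ≤ q * q := by nlinarith
      have h5 : (q:ℝ) * q ≤ q * q * (p:ℝ)^((1:ℝ)/2) :=
        le_mul_of_one_le_right (by positivity) hs1'
      exact mul_le_mul_of_nonneg_left (h4.trans h5) (by positivity)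
    calc _ ≤ q * ((18 * (r * q)) * (p:ℝ)^((1:ℝ)/2)) + 2 * r * (q * q * (p:ℝ)^((1:ℝ)/2)) :=
          add_le_add h2 h3
      _ = 20 * r * ((p:ℝ)^((1:ℝ)/2) * q^2) := by ring
      _ ≤ 20 * r * ((p:ℝ)^((1:ℝ)/2) * (p:ℝ)^(2*β)) := by gcongr
      _ = _ := by rw [← Real.rpow_add hp0]
  have hL : (B:ℝ)^(2*r) * (c * ((p:ℝ)^(1/2+2*δ-3*β) / 2)) ≤
      (η / 4) * (As.card * N) * (η * B / 2) ^ (2 * r) := by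
    calc (B:ℝ)^(2*r) * (c * ((p:ℝ)^(1/2+2*δ-3*β) / 2))
        = (η/4) * ((p:ℝ)^(1/4+δ-3*β) * ((p:ℝ)^(1/4+δ)/2)) * (η * B / 2)^(2*r) := by
          have e : (p:ℝ)^(1/2+2*δ-3*β) = (p:ℝ)^(1/4+δ-3*β) * (p:ℝ)^(1/4+δ) := by
            rw [← Real.rpow_add hp0]; congr 1; ring
          have e2 : (η * B / 2)^(2*r) = (η/2)^(2*r) * (B:ℝ)^(2*r) := by
            rw [← mul_pow]; congr 1; ring
          rw [e, e2, hc]; ring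
      _ ≤ _ := mul_le_mul_of_nonneg_right (mul_le_mul_of_nonneg_left
          (mul_le_mul hcard hNge (by positivity) (Nat.cast_nonneg _)) (by positivity))
          (by positivity)
  have hR2' := mul_le_mul_of_nonneg_left hR2 (by positivity : 0 ≤ (B:ℝ)^(2*r))
  have hcomb : (B:ℝ)^(2*r) * (c * ((p:ℝ)^(1/2+2*δ-3*β) / 2)) ≤
      (B:ℝ)^(2*r) * ((r ^ (2 * r) + 20 * r) * (p:ℝ)^(1/2+2*β)) := by
    linarith
  have hfin1 := le_of_mul_le_mul_left hcomb (by positivity)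
  have hfin2 := mul_le_mul_of_nonneg_left hfin hc0.le
  have e3 : c * (4 / c * (r ^ (2 * r) + 20 * r) * (p:ℝ)^(1/2+2*β)) =
      4 * ((r ^ (2 * r) + 20 * r) * (p:ℝ)^(1/2+2*β)) := aux_cancel c _ _ hc0.ne'
  rw [e3] at hfin2
  have hpos : 0 < ((r:ℝ) ^ (2 * r) + 20 * r) * (p:ℝ)^(1/2+2*β) := by positivity
  linarith
end SG
end

section
namespace SG
lemma closure_top {p : ℕ} [Fact p.Prime] (S : Set (ZMod p)ˣ)
    (h : ∀ q g : ℕ, q.Prime → q * g + 1 = p → ∃ u ∈ S, u ^ g ≠ 1) :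
    Subgroup.closure S = ⊤ := by
  have hp : p.Prime := Fact.out
  by_contra hne
  set K := Subgroup.closure S with hK
  have h1 : K.index ≠ 1 := fun h => hne (Subgroup.index_eq_one.1 h)
  obtain ⟨q, hq, hqd⟩ := Nat.exists_prime_and_dvd h1
  obtain ⟨j, hj⟩ := hqd
  have hc := K.card_mul_index
  rw [Nat.card_eq_fintype_card (α := (ZMod p)ˣ), ZMod.card_units p, hj] at hc
  obtain ⟨u, hu, hug⟩ := h q (Nat.card K * j) hq (by
    have := hp.one_le
    have e : q * (Nat.card K * j) = Nat.card K * (q * j) := by ring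
    omega)
  apply hug
  have huK : u ∈ K := Subgroup.subset_closure hu
  have h2 : (⟨u, huK⟩ : K) ^ Nat.card K = 1 := pow_card_eq_one'
  have h3 : u ^ Nat.card K = 1 := by
    exact congrArg Subtype.val h2
  rw [pow_mul, h3, one_pow]
end SG
end

theorem small_generating_set_card_omega (ε : ℝ) (hε : 0 < ε) :
    ∃ p₀ : ℕ, ∀ p : ℕ, p.Prime → p₀ ≤ p →
      ∃ x : Fin ((p - 1).primeFactors.card) → ℕ,
        (∀ i, 1 ≤ x i ∧ (x i : ℝ) ≤ (p : ℝ) ^ (1 / (4 * Real.sqrt (Real.exp 1)) + ε)) ∧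
        Subgroup.closure {u : (ZMod p)ˣ | ∃ i, (u : ZMod p) = (x i : ZMod p)} = ⊤ := by
  set ε' := min ε (1/100) with hε'
  have h0 : 0 < ε' := lt_min hε (by norm_num)
  obtain ⟨p₀, hp₀⟩ := Filter.eventually_atTop.1 (SG.nonres ε' h0 (min_le_right _ _))
  refine ⟨p₀, fun p hp hpp => ?_⟩
  have hf : Fact p.Prime := ⟨hp⟩
  have hp1 : (1:ℝ) ≤ p := by exact_mod_cast hp.one_le
  have h := hp₀ p hpp hp
  have h2 : ∀ q : (p - 1).primeFactors, ∃ m : ℕ, 1 ≤ m ∧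
      (m:ℝ) ≤ (p:ℝ) ^ (1 / (4 * Real.sqrt (Real.exp 1)) + ε') ∧
      (m : ZMod p) ^ ((p - 1) / q) ≠ 1 := by
    rintro ⟨q, hq⟩
    rw [Nat.mem_primeFactors] at hq
    refine h q _ hq.1 ?_
    rw [Nat.mul_div_cancel' hq.2.1]
    have := hp.one_le
    omega
  choose f hf1 hf2 hf3 using h2
  refine ⟨fun i => f ((p - 1).primeFactors.equivFin.symm i), fun i => ⟨hf1 _, (hf2 _).trans ?_⟩, ?_⟩
  · apply Real.rpow_le_rpow_of_exponent_le hp1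
    have := min_le_left ε (1/100)
    linarith
  · apply SG.closure_top
    intro q g hq hqg
    have hqm : q ∈ (p - 1).primeFactors := by
      rw [Nat.mem_primeFactors]
      refine ⟨hq, ⟨g, by omega⟩, ?_⟩
      have := hp.two_le
      omega
    have hg : (p - 1) / q = g := by
      rw [← hqg, Nat.add_sub_cancel, Nat.mul_div_cancel_left _ hq.pos]
    have hm := hf3 ⟨q, hqm⟩
    rw [hg] at hm
    have hle : f ⟨q, hqm⟩ < p := by
      have h3 := hf2 ⟨q, hqm⟩
      have h4 : (f ⟨q, hqm⟩ : ℝ) < p := by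
        refine lt_of_le_of_lt h3 ?_
        have hs1 : 1 ≤ Real.sqrt (Real.exp 1) := by
          rw [Real.one_le_sqrt]
          exact Real.one_le_exp (by norm_num)
        have h5 : 1 / (4 * Real.sqrt (Real.exp 1)) ≤ 1 / 4 :=
          one_div_le_one_div_of_le (by norm_num) (by linarith)
        have h6 : ε' ≤ 1/100 := min_le_right _ _
        calc (p:ℝ) ^ (1 / (4 * Real.sqrt (Real.exp 1)) + ε') < (p:ℝ) ^ (1:ℝ) := by
              apply Real.rpow_lt_rpow_of_exponent_lt
              · exact_mod_cast hp.one_lt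
              · linarith
          _ = p := Real.rpow_one _
      exact_mod_cast h4
    have hne : (f ⟨q, hqm⟩ : ZMod p) ≠ 0 := by
      intro h0
      rw [ZMod.natCast_eq_zero_iff] at h0
      exact absurd (Nat.le_of_dvd (hf1 _) h0) (by omega)
    refine ⟨Units.mk0 _ hne, ⟨(p - 1).primeFactors.equivFin ⟨q, hqm⟩, by simp⟩, fun h7 => hm ?_⟩
    have := congrArg Units.val h7
    simpa using this
end

section
/- Fix ε > 0. There exists a constant C > 0 such that the set of primes p for which the following holds has asymptotic density 1 among all primes: there exists a set S of integers contained in [1, p^{1/(4√e)+ε}] with #S ≤ C·(log log log p)² whose residues modulo p generate the multiplicative group (ZMod p)ˣ. Precisely, #{p ≤ x prime : no such set S exists} = o(π(x)) as x → ∞. -/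
open Filter
open scoped Classical


namespace SGS

lemma sum_periodic_abs_le (g : ℕ → ℝ) (M : ℕ) (hM : 0 < M) (B : ℝ)
    (hper : ∀ n, g (M + n) = g n) (h0 : ∑ n ∈ Finset.range M, g n = 0) (hB : ∀ n, |g n| ≤ B) :
    ∀ N : ℕ, |∑ n ∈ Finset.range N, g n| ≤ M * B := by
  have hB0 : 0 ≤ B := (abs_nonneg _).trans (hB 0)
  intro N
  induction N using Nat.strong_induction_on with
  | _ N ih =>
    rcases lt_or_ge N M with h | h
    · calc |∑ n ∈ Finset.range N, g n| ≤ ∑ n ∈ Finset.range N, |g n| :=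
            Finset.abs_sum_le_sum_abs _ _
        _ ≤ ∑ n ∈ Finset.range N, B := Finset.sum_le_sum fun n _ => hB n
        _ = N * B := by simp
        _ ≤ M * B := by gcongr
    · obtain ⟨k, rfl⟩ := Nat.exists_eq_add_of_le h
      rw [Finset.sum_range_add, h0, zero_add]
      simp_rw [hper]
      exact ih k (by omega)

lemma sum_periodic_le (g : ℕ → ℝ) (M : ℕ) (hM : 0 < M)
    (hper : ∀ n, g (M + n) = g n) (h0 : ∀ n, 0 ≤ g n) :
    ∀ N : ℕ, (∑ n ∈ Finset.range N, g n) * M ≤ (N + M) * ∑ n ∈ Finset.range M, g n := by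
  intro N
  induction N using Nat.strong_induction_on with
  | _ N ih =>
    rcases lt_or_ge N M with h | h
    · have h1 : ∑ n ∈ Finset.range N, g n ≤ ∑ n ∈ Finset.range M, g n :=
        Finset.sum_le_sum_of_subset_of_nonneg (Finset.range_mono h.le) (fun n _ _ => h0 n)
      have h2 : 0 ≤ ∑ n ∈ Finset.range M, g n := Finset.sum_nonneg fun n _ => h0 n
      have : (0:ℝ) ≤ N := Nat.cast_nonneg _
      have : (0:ℝ) ≤ M := Nat.cast_nonneg _
      nlinarith
    · obtain ⟨k, rfl⟩ := Nat.exists_eq_add_of_le h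
      rw [Finset.sum_range_add]
      simp_rw [hper]
      have := ih k (by omega)
      push_cast
      nlinarith

lemma sum_range_zmod (M : ℕ) [NeZero M] (G : ZMod M → ℝ) :
    ∑ n ∈ Finset.range M, G (n : ZMod M) = ∑ z : ZMod M, G z := by
  obtain ⟨k, rfl⟩ : ∃ k, M = k + 1 := ⟨M - 1, by have := NeZero.pos M; omega⟩
  rw [← Fin.sum_univ_eq_sum_range (fun n => G (n : ZMod (k + 1)))]
  refine Finset.sum_congr rfl fun (i : ZMod (k + 1)) _ => ?_
  congr 1
  exact ZMod.natCast_zmod_val i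

lemma cross_sum (p r : ℕ) [NeZero p] [NeZero r] (h : p.Coprime r) (f : ZMod p → ℝ) (g : ZMod r → ℝ)
    (hf : ∑ z, f z = 0) (B C : ℝ) (hB : ∀ z, |f z| ≤ B) (hC : ∀ z, |g z| ≤ C) (N : ℕ) :
    |∑ n ∈ Finset.range N, f (n : ZMod p) * g (n : ZMod r)| ≤ p * r * (B * C) := by
  have hB0 : 0 ≤ B := (abs_nonneg _).trans (hB 0)
  have key := sum_periodic_abs_le (fun n : ℕ => f (n : ZMod p) * g (n : ZMod r)) (p * r)
    (Nat.mul_pos (NeZero.pos p) (NeZero.pos r)) (B * C) (by intro n; simp) ?_ ?_ N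
  · simpa using key
  · have := sum_range_zmod (p * r) (fun z => f (ZMod.chineseRemainder h z).1 *
      g (ZMod.chineseRemainder h z).2)
    simp only [map_natCast, Prod.fst_natCast, Prod.snd_natCast] at this
    rw [this]
    refine ((ZMod.chineseRemainder h).toEquiv.sum_comp
      (fun w : ZMod p × ZMod r => f w.1 * g w.2)).trans ?_
    rw [Fintype.sum_prod_type]
    simp_rw [← Finset.mul_sum]
    rw [← Finset.sum_mul, hf, zero_mul]
  · intro n
    rw [abs_mul]
    exact mul_le_mul (hB _) (hC _) (abs_nonneg _) hB0

/-- elements killed by the exponent `(p-1)/q` -/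
noncomputable def A (p q : ℕ) [NeZero p] : Finset (ZMod p) :=
  Finset.univ.filter fun a => a ^ ((p - 1) / q) = 1

lemma card_A (p q : ℕ) [Fact p.Prime] (hq : q.Prime) (hqp : q ∣ p - 1) :
    (A p q).card * q ≤ p - 1 := by
  obtain ⟨d, hd⟩ := hqp
  have hp := (Fact.out : p.Prime).two_le
  have hd0 : 0 < d := by
    rcases Nat.eq_zero_or_pos d with h | h
    · subst h; omega
    · exact h
  have hdd : (p - 1) / q = d := by rw [hd]; exact Nat.mul_div_cancel_left _ hq.pos
  have h1 : (A p q).card ≤ d := by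
    have hs : A p q ⊆ (Polynomial.nthRoots d (1 : ZMod p)).toFinset := by
      intro a ha
      simp only [A, hdd, Finset.mem_filter] at ha
      rw [Multiset.mem_toFinset, Polynomial.mem_nthRoots hd0]
      exact ha.2
    exact (Finset.card_le_card hs).trans ((Multiset.toFinset_card_le _).trans
      (Polynomial.card_nthRoots d _))
  rw [hd, mul_comm]
  exact Nat.mul_le_mul_left _ h1

noncomputable def f (p q : ℕ) [NeZero p] (a : ZMod p) : ℝ :=
  √q * ((if a ∈ A p q then 1 else 0) - (A p q).card / p)

lemma sum_f (p q : ℕ) [NeZero p] : ∑ a, f p q a = 0 := by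
  have : (p : ℝ) ≠ 0 := NeZero.ne _
  simp only [f]
  rw [← Finset.mul_sum, Finset.sum_sub_distrib]
  simp
  right
  field_simp
  simp

lemma card_div_le (p q : ℕ) [Fact p.Prime] (hq : q.Prime) (hqp : q ∣ p - 1) :
    ((A p q).card : ℝ) / p ≤ 1 / q := by
  have h := card_A p q hq hqp
  have hp := (Fact.out : p.Prime).pos
  have hq := hq.pos
  rw [div_le_div_iff₀ (by positivity) (by positivity)]
  exact_mod_cast (show _ ≤ 1 * p by omega)

lemma abs_f_le (p q : ℕ) [Fact p.Prime] (hq : q.Prime) (hqp : q ∣ p - 1) (a : ZMod p) :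
    |f p q a| ≤ √q := by
  have h := card_div_le p q hq hqp
  have h2 : (1:ℝ) / q ≤ 1 := by
    have : (1:ℝ) ≤ q := by exact_mod_cast hq.one_le
    rw [div_le_one (by linarith)]; exact this
  have h0 : (0:ℝ) ≤ ((A p q).card : ℝ) / p := by positivity
  rw [f, abs_mul, abs_of_nonneg (Real.sqrt_nonneg _)]
  have : |((if a ∈ A p q then 1 else 0) : ℝ) - (A p q).card / p| ≤ 1 := by
    rw [abs_le]; split_ifs <;> constructor <;> linarith
  nlinarith [Real.sqrt_nonneg (q:ℝ)]

lemma sum_f_sq (p q : ℕ) [Fact p.Prime] (hq : q.Prime) (hqp : q ∣ p - 1) :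
    ∑ a, f p q a ^ 2 ≤ p := by
  have hp : (0:ℝ) < p := by exact_mod_cast (Fact.out : p.Prime).pos
  have h := card_A p q hq hqp
  have hr : ((A p q).card : ℝ) * q ≤ p := by exact_mod_cast h.trans (Nat.sub_le _ _)
  have e : ∀ a, f p q a ^ 2 = q * ((if a ∈ A p q then 1 else 0) * (1 - 2 * ((A p q).card / p))
      + ((A p q).card / p : ℝ) ^ 2) := by
    intro a
    rw [f, mul_pow, Real.sq_sqrt (by positivity)]
    split_ifs <;> ring
  simp_rw [e]
  rw [← Finset.mul_sum, Finset.sum_add_distrib, ← Finset.sum_mul]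
  simp only [Finset.sum_ite_mem, Finset.univ_inter, Finset.sum_const, nsmul_eq_mul, mul_one,
    Finset.card_univ, ZMod.card]
  have : (q:ℝ) * ((A p q).card * (1 - 2 * ((A p q).card / p)) + p * ((A p q).card / p : ℝ) ^ 2)
    = (A p q).card * q - q * (A p q).card ^ 2 / p := by field_simp; ring
  rw [this]
  have : (0:ℝ) ≤ q * (A p q).card ^ 2 / p := by positivity
  linarith

lemma diag_sum (p q : ℕ) [Fact p.Prime] (hq : q.Prime) (hqp : q ∣ p - 1) (N : ℕ) (hN : p ≤ N) :
    ∑ n ∈ Finset.range N, f p q (n : ZMod p) * f p q (n : ZMod p) ≤ 2 * N := by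
  have hp : (0:ℝ) < p := by exact_mod_cast (Fact.out : p.Prime).pos
  have h := sum_periodic_le (fun n : ℕ => f p q (n : ZMod p) ^ 2) p (Fact.out : p.Prime).pos
    (by intro n; simp) (fun n => sq_nonneg _) N
  rw [sum_range_zmod p (fun z => f p q z ^ 2)] at h
  have h1 := sum_f_sq p q hq hqp
  have h2 : ((N:ℝ) + p) * ∑ a, f p q a ^ 2 ≤ (N + p) * p := by gcongr
  have h3 := le_of_mul_le_mul_right (h.trans h2) hp
  have h4 : (p:ℝ) ≤ N := by exact_mod_cast hN
  simp_rw [← pow_two]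
  linarith

/-- The Turán-type variance bound. -/
lemma variance (E : Finset ℕ) (q : ℕ → ℕ) (Q N : ℕ) (hE : ∀ p ∈ E, p.Prime ∧ p ≤ Q ∧ p ≤ N)
    (hq : ∀ p ∈ E, (q p).Prime ∧ q p ∣ p - 1) (F : ℕ → ℕ → ℝ)
    (hF : ∀ p ∈ E, ∀ hp : p.Prime, haveI := Fact.mk hp; ∀ n, F p n = f p (q p) (n : ZMod p)) :
    ∑ n ∈ Finset.range N, (∑ p ∈ E, F p n) ^ 2 ≤ 2 * N * E.card + (E.card : ℝ) ^ 2 * Q ^ 3 := by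
  have h1 : ∀ p ∈ E, ∀ r ∈ E, ∑ n ∈ Finset.range N, F p n * F r n ≤
      (if p = r then (2 * N : ℝ) else 0) + Q ^ 3 := by
    intro p hp r hr
    obtain ⟨pp, pQ, pN⟩ := hE p hp
    obtain ⟨rp, rQ, rN⟩ := hE r hr
    have qp := hq p hp
    have qr := hq r hr
    have e1 := hF p hp pp
    have e2 := hF r hr rp
    have := Fact.mk pp
    have := Fact.mk rp
    simp_rw [e1, e2]
    split_ifs with h
    · subst h
      have := diag_sum p (q p) qp.1 qp.2 N pN
      have h3 : (0:ℝ) ≤ Q ^ 3 := by positivity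
      linarith
    · have := (le_abs_self _).trans (cross_sum p r ((Nat.coprime_primes pp rp).2 h)
        (f p (q p)) (f r (q r)) (sum_f _ _) _ _
        (abs_f_le p (q p) qp.1 qp.2) (abs_f_le r (q r) qr.1 qr.2) N)
      refine this.trans ?_
      have a1 : q p ≤ Q := (Nat.le_of_dvd (by have := pp.two_le; omega) qp.2).trans (by omega)
      have a2 : q r ≤ Q := (Nat.le_of_dvd (by have := rp.two_le; omega) qr.2).trans (by omega)
      calc (p:ℝ) * r * (√(q p) * √(q r)) ≤ Q * Q * (√Q * √Q) := by gcongr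
        _ = 0 + Q ^ 3 := by rw [Real.mul_self_sqrt (by positivity)]; ring
  calc ∑ n ∈ Finset.range N, (∑ p ∈ E, F p n) ^ 2
      = ∑ p ∈ E, ∑ r ∈ E, ∑ n ∈ Finset.range N, F p n * F r n := by
        simp_rw [pow_two, Finset.sum_mul_sum]
        rw [Finset.sum_comm]
        refine Finset.sum_congr rfl fun p _ => ?_
        rw [Finset.sum_comm]
    _ ≤ ∑ p ∈ E, ∑ r ∈ E, ((if p = r then (2 * N : ℝ) else 0) + Q ^ 3) :=
        Finset.sum_le_sum fun p hp => Finset.sum_le_sum fun r hr => h1 p hp r hr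
    _ = _ := by
        simp only [Finset.sum_add_distrib, Finset.sum_ite_eq, Finset.sum_const, nsmul_eq_mul]
        rw [Finset.sum_ite_mem, Finset.inter_self, Finset.sum_const, nsmul_eq_mul]
        ring

/-- number of tuples -/
lemma fiber_bound (P : Finset ℕ) (hP : ∀ a ∈ P, a.Prime) (m y : ℕ) (hy : ∀ a ∈ P, a ≤ y)
    (G : ℕ → ℝ) (hG : ∀ n, 0 ≤ G n) :
    ∑ t ∈ Fintype.piFinset (fun _ : Fin m => P), G (∏ i, t i) ≤
      (m : ℝ) ^ m * ∑ n ∈ Finset.range (y ^ m + 1), G n := by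
  have hmaps : ∀ t ∈ Fintype.piFinset (fun _ : Fin m => P),
      ∏ i, t i ∈ Finset.range (y ^ m + 1) := by
    intro t ht
    rw [Fintype.mem_piFinset] at ht
    rw [Finset.mem_range, Nat.lt_succ_iff]
    calc ∏ i, t i ≤ ∏ _i : Fin m, y := Finset.prod_le_prod' fun i _ => hy _ (ht i)
      _ = y ^ m := by simp
  rw [← Finset.sum_fiberwise_of_maps_to hmaps, Finset.mul_sum]
  refine Finset.sum_le_sum fun n _ => ?_
  rw [Finset.sum_congr rfl (g := fun _ => G n)
    (fun t ht => by rw [(Finset.mem_filter.1 ht).2]), Finset.sum_const, nsmul_eq_mul]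
  refine mul_le_mul_of_nonneg_right ?_ (hG n)
  rcases Finset.eq_empty_or_nonempty
    (Finset.filter (fun t => ∏ i, t i = n) (Fintype.piFinset (fun _ : Fin m => P))) with h | ⟨t0, h0⟩
  · rw [h]; simp
  · rw [Finset.mem_filter, Fintype.mem_piFinset] at h0
    have hc : n.primeFactors.card ≤ m := by
      have : n.primeFactors ⊆ Finset.univ.image t0 := by
        intro r hr
        have hr1 := Nat.prime_of_mem_primeFactors hr
        have hr2 := Nat.dvd_of_mem_primeFactors hr
        rw [← h0.2, hr1.prime.dvd_finsetProd_iff] at hr2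
        obtain ⟨i, _, hi⟩ := hr2
        rw [Finset.mem_image]
        exact ⟨i, Finset.mem_univ _, ((Nat.prime_dvd_prime_iff_eq hr1 (hP _ (h0.1 i))).1 hi).symm⟩
      exact (Finset.card_le_card this).trans (Finset.card_image_le.trans (by simp))
    have hn0 : n ≠ 0 := by
      rw [← h0.2]
      exact Finset.prod_ne_zero_iff.2 fun i _ => (hP _ (h0.1 i)).ne_zero
    have hs : Finset.filter (fun t => ∏ i, t i = n) (Fintype.piFinset (fun _ : Fin m => P)) ⊆
        Fintype.piFinset (fun _ : Fin m => n.primeFactors) := by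
      intro t ht
      rw [Finset.mem_filter, Fintype.mem_piFinset] at ht
      rw [Fintype.mem_piFinset]
      intro i
      rw [Nat.mem_primeFactors]
      exact ⟨hP _ (ht.1 i), ht.2 ▸ Finset.dvd_prod_of_mem _ (Finset.mem_univ i), hn0⟩
    have := Finset.card_le_card hs
    rw [Fintype.card_piFinset] at this
    simp only [Finset.prod_const, Finset.card_univ, Fintype.card_fin] at this
    exact_mod_cast this.trans (Nat.pow_le_pow_left hc m)

/-- tuples whose product is killed -/
noncomputable def cnt (P : Finset ℕ) (m p q : ℕ) : ℕ :=
  ((Fintype.piFinset (fun _ : Fin m => P)).filter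
    fun t => ((∏ i, t i : ℕ) : ZMod p) ^ ((p - 1) / q) = 1).card

lemma main_bound (P : Finset ℕ) (hP : ∀ a ∈ P, a.Prime) (m y Q : ℕ) (hy : ∀ a ∈ P, a ≤ y)
    (E : Finset ℕ) (hE : ∀ p ∈ E, p.Prime ∧ p ≤ Q) (hQN : Q ≤ y ^ m + 1)
    (hbad : ∀ p ∈ E, ∃ q : ℕ, q.Prime ∧ q ∣ p - 1 ∧ (P.card : ℝ) ^ m ≤ cnt P m p q * √q)
    (hP0 : 0 < P.card) :
    (P.card : ℝ) ^ m * (E.card : ℝ) ^ 2 ≤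
      16 * (m : ℝ) ^ m * (2 * (y ^ m + 1 : ℕ) * E.card + (E.card : ℝ) ^ 2 * Q ^ 3) := by
  choose! q hq1 hq2 hq3 using hbad
  let F : ℕ → ℕ → ℝ := fun p n => if hp : p.Prime then
    haveI := Fact.mk hp
    f p (q p) (n : ZMod p) else 0
  have hF : ∀ p ∈ E, ∀ hp : p.Prime, haveI := Fact.mk hp; ∀ n, F p n = f p (q p) (n : ZMod p) := by
    intro p _ hp n
    simp only [F, dif_pos hp]
  have hv := variance E q Q (y ^ m + 1) (fun p hp => ⟨(hE p hp).1, (hE p hp).2,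
    (hE p hp).2.trans hQN⟩) (fun p hp => ⟨hq1 p hp, hq2 p hp⟩) F hF
  set T := Fintype.piFinset (fun _ : Fin m => P) with hT
  have hTc : (T.card : ℝ) = (P.card : ℝ) ^ m := by
    rw [hT, Fintype.card_piFinset]; simp
  have hfb := fiber_bound P hP m y hy (fun n => (∑ p ∈ E, F p n) ^ 2) (fun n => sq_nonneg _)
  have hcs : (∑ t ∈ T, ∑ p ∈ E, F p (∏ i, t i)) ^ 2 ≤
      T.card * ∑ t ∈ T, (∑ p ∈ E, F p (∏ i, t i)) ^ 2 := sq_sum_le_card_mul_sum_sq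
  have hlow : (P.card : ℝ) ^ m * E.card / 4 ≤ ∑ t ∈ T, ∑ p ∈ E, F p (∏ i, t i) := by
    rw [Finset.sum_comm]
    have : ∀ p ∈ E, (P.card : ℝ) ^ m / 4 ≤ ∑ t ∈ T, F p (∏ i, t i) := by
      intro p hp
      have pp := (hE p hp).1
      have := Fact.mk pp
      have e : ∀ t ∈ T, F p (∏ i, t i) = √(q p) *
          ((if ((∏ i, t i : ℕ) : ZMod p) ^ ((p - 1) / (q p)) = 1 then 1 else 0)
            - (A p (q p)).card / p) := by
        intro t _
        rw [hF p hp pp, f]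
        simp only [A, Finset.mem_filter, Finset.mem_univ, true_and]
      rw [Finset.sum_congr rfl e, ← Finset.mul_sum, Finset.sum_sub_distrib, Finset.sum_boole,
        Finset.sum_const, nsmul_eq_mul, hTc]
      have h3 := hq3 p hp
      rw [cnt, ← hT] at h3
      have h4 := card_div_le p (q p) (hq1 p hp) (hq2 p hp)
      have hq2' : (2:ℝ) ≤ q p := by exact_mod_cast (hq1 p hp).two_le
      set s := √(q p : ℝ) with hs
      have hss : s * s = q p := Real.mul_self_sqrt (by positivity)
      have hs1 : (4/3:ℝ) ≤ s := by
        rw [hs]; apply Real.le_sqrt_of_sq_le; linarith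
      have hK : (0:ℝ) ≤ (P.card : ℝ) ^ m := by positivity
      have h5 : s * ((P.card : ℝ) ^ m * ((A p (q p)).card / p)) ≤ (P.card : ℝ) ^ m * (3 / 4) := by
        calc s * ((P.card : ℝ) ^ m * ((A p (q p)).card / p))
            ≤ s * ((P.card : ℝ) ^ m * (1 / q p)) := by gcongr
          _ = (P.card : ℝ) ^ m * (1 / s) := by
            rw [← hss]; field_simp
          _ ≤ (P.card : ℝ) ^ m * (3 / 4) := by
            refine mul_le_mul_of_nonneg_left ?_ hK
            rw [div_le_iff₀ (by linarith)]; linarith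
      rw [mul_sub]
      linarith
    calc (P.card : ℝ) ^ m * E.card / 4 = ∑ p ∈ E, (P.card : ℝ) ^ m / 4 := by
          rw [Finset.sum_const, nsmul_eq_mul]; ring
      _ ≤ _ := Finset.sum_le_sum this
  have hK : (0:ℝ) < (P.card : ℝ) ^ m := by positivity
  have h1 : ((P.card : ℝ) ^ m * E.card / 4) ^ 2 ≤ (P.card : ℝ) ^ m * ((m:ℝ) ^ m *
      (2 * (y ^ m + 1 : ℕ) * E.card + (E.card : ℝ) ^ 2 * Q ^ 3)) := by
    refine (pow_le_pow_left₀ (by positivity) hlow 2).trans (hcs.trans ?_)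
    rw [hTc]
    gcongr
    refine hfb.trans ?_
    gcongr
  refine le_of_mul_le_mul_left ?_ hK
  nlinarith

lemma generate (p : ℕ) [Fact p.Prime] (P : Finset ℕ) (m : ℕ) (hP0 : 0 < P.card)
    (hgood : ∀ q : ℕ, q.Prime → q ∣ p - 1 → (cnt P m p q : ℝ) * √q < (P.card : ℝ) ^ m)
    (hPp : ∀ a ∈ P, (a : ZMod p) ≠ 0) :
    ∃ S ⊆ P, S.card ≤ 4 * m ∧
      Subgroup.closure {u : (ZMod p)ˣ | ∃ n ∈ S, (u : ZMod p) = (n : ZMod p)} = ⊤ := by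
  let R : ℕ → Finset ℕ := fun q => P.filter fun a => (a : ZMod p) ^ ((p - 1) / q) = 1
  have hp1 : p - 1 ≠ 0 := by have := (Fact.out : p.Prime).two_le; omega
  have hR : ∀ q ∈ (p - 1).primeFactors,
      ((R q).card : ℝ) ^ (4 * m) ≤ (P.card : ℝ) ^ (4 * m) * ((q : ℝ) ^ 2)⁻¹ := by
    intro q hq
    have hq1 := Nat.prime_of_mem_primeFactors hq
    have hg := hgood q hq1 (Nat.dvd_of_mem_primeFactors hq)
    have hsub : Fintype.piFinset (fun _ : Fin m => R q) ⊆
      (Fintype.piFinset (fun _ : Fin m => P)).filter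
        fun t => ((∏ i, t i : ℕ) : ZMod p) ^ ((p - 1) / q) = 1 := by
      intro t ht
      rw [Fintype.mem_piFinset] at ht
      rw [Finset.mem_filter, Fintype.mem_piFinset]
      refine ⟨fun i => (Finset.mem_filter.1 (ht i)).1, ?_⟩
      rw [Nat.cast_prod, ← Finset.prod_pow]
      exact Finset.prod_eq_one fun i _ => (Finset.mem_filter.1 (ht i)).2
    have hc := Finset.card_le_card hsub
    rw [Fintype.card_piFinset] at hc
    simp only [Finset.prod_const, Finset.card_univ, Fintype.card_fin] at hc
    have hc' : ((R q).card : ℝ) ^ m ≤ cnt P m p q := by rw [cnt]; exact_mod_cast hc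
    have h1 : ((R q).card : ℝ) ^ m * √q ≤ (P.card : ℝ) ^ m :=
      (mul_le_mul_of_nonneg_right hc' (Real.sqrt_nonneg _)).trans hg.le
    have h2 := pow_le_pow_left₀ (by positivity) h1 4
    have hq0 : (0:ℝ) < q := by exact_mod_cast hq1.pos
    have h3 : √(q:ℝ) ^ 4 = (q:ℝ) ^ 2 := by
      rw [show 4 = 2 * 2 from rfl, pow_mul, Real.sq_sqrt hq0.le]
    rw [mul_pow, h3, ← pow_mul, ← pow_mul, mul_comm m 4] at h2
    rw [← div_eq_mul_inv, le_div_iff₀ (by positivity)]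
    exact h2
  have hsum : ∑ q ∈ (p - 1).primeFactors, ((q : ℝ) ^ 2)⁻¹ < 1 := by
    have hsub : (p - 1).primeFactors ⊆ Finset.Ioc 1 (p - 1) := by
      intro q hq
      rw [Finset.mem_Ioc]
      exact ⟨(Nat.prime_of_mem_primeFactors hq).one_lt, Nat.le_of_mem_primeFactors hq⟩
    have h1 := Finset.sum_le_sum_of_subset_of_nonneg (f := fun q : ℕ => ((q : ℝ) ^ 2)⁻¹) hsub
      (fun _ _ _ => by positivity)
    have h2 := sum_Ioc_inv_sq_le_sub (α := ℝ) (k := 1) (n := p - 1) one_ne_zero (by omega)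
    have h3 : (0:ℝ) < ((p - 1 : ℕ) : ℝ)⁻¹ := by
      have : (0:ℝ) < ((p - 1 : ℕ) : ℝ) := by exact_mod_cast Nat.pos_of_ne_zero hp1
      positivity
    simp only [Nat.cast_one, inv_one] at h2
    linarith
  have hlt : (((p - 1).primeFactors.biUnion fun q =>
      Fintype.piFinset (fun _ : Fin (4 * m) => R q)).card : ℝ) <
      ((Fintype.piFinset (fun _ : Fin (4 * m) => P)).card : ℝ) := by
    have hK : (0:ℝ) < (P.card : ℝ) ^ (4 * m) := by positivity
    calc (((p - 1).primeFactors.biUnion fun q =>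
      Fintype.piFinset (fun _ : Fin (4 * m) => R q)).card : ℝ)
        ≤ ∑ q ∈ (p - 1).primeFactors, ((R q).card : ℝ) ^ (4 * m) := by
          have := Finset.card_biUnion_le (s := (p - 1).primeFactors)
            (t := fun q => Fintype.piFinset (fun _ : Fin (4 * m) => R q))
          simp only [Fintype.card_piFinset, Finset.prod_const, Finset.card_univ,
            Fintype.card_fin] at this
          exact_mod_cast this
      _ ≤ ∑ q ∈ (p - 1).primeFactors, (P.card : ℝ) ^ (4 * m) * ((q : ℝ) ^ 2)⁻¹ :=
          Finset.sum_le_sum hR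
      _ < (P.card : ℝ) ^ (4 * m) := by
          rw [← Finset.mul_sum]
          nlinarith
      _ = _ := by simp [Fintype.card_piFinset]
  obtain ⟨s, hs1, hs2⟩ := Finset.exists_mem_notMem_of_card_lt_card (by exact_mod_cast hlt)
  rw [Fintype.mem_piFinset] at hs1
  refine ⟨Finset.univ.image s, ?_, Finset.card_image_le.trans (by simp), ?_⟩
  · intro a ha
    obtain ⟨i, _, rfl⟩ := Finset.mem_image.1 ha
    exact hs1 i
  · by_contra hne
    set H := Subgroup.closure
      {u : (ZMod p)ˣ | ∃ n ∈ Finset.univ.image s, (u : ZMod p) = (n : ZMod p)} with hH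
    have hi : H.index ≠ 1 := fun h => hne (Subgroup.index_eq_one.1 h)
    obtain ⟨q, hq, hqi⟩ := Nat.exists_prime_and_dvd hi
    have hcard : Nat.card H * H.index = p - 1 := by
      rw [Subgroup.card_mul_index, Nat.card_eq_fintype_card, ZMod.card_units]
    have hdvd : Nat.card H ∣ (p - 1) / q := by
      obtain ⟨c, hc⟩ := hqi
      rw [← hcard, hc, show Nat.card H * (q * c) = q * (Nat.card H * c) by ring,
        Nat.mul_div_cancel_left _ hq.pos]
      exact dvd_mul_right _ _
    apply hs2
    rw [Finset.mem_biUnion]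
    refine ⟨q, Nat.mem_primeFactors.2 ⟨hq, hqi.trans (hcard ▸ dvd_mul_left _ _), hp1⟩, ?_⟩
    rw [Fintype.mem_piFinset]
    intro i
    refine Finset.mem_filter.2 ⟨hs1 i, ?_⟩
    let u : (ZMod p)ˣ := Units.mk0 (s i : ZMod p) (hPp _ (hs1 i))
    have hu : u ∈ H := Subgroup.subset_closure
      ⟨s i, Finset.mem_image_of_mem _ (Finset.mem_univ i), rfl⟩
    have h1 : u ^ (Nat.card H) = 1 := by
      have := congrArg Subtype.val (pow_card_eq_one' (x := (⟨u, hu⟩ : H)))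
      exact this
    obtain ⟨c, hc⟩ := hdvd
    have h2 : u ^ ((p - 1) / q) = 1 := by rw [hc, pow_mul, h1, one_pow]
    have := congrArg (Units.val) h2
    simpa [u] using this

end SGS

namespace SGS

lemma pi_lower : ∀ᶠ n : ℕ in atTop, n ^ 63 ≤ (Nat.primeCounting n) ^ 64 := by
  have h1 := ((isLittleO_log_rpow_atTop (r := 1 / 64) (by norm_num)).bound
    (c := 1 / 8) (by norm_num)).natCast_atTop
  filter_upwards [h1, eventually_ge_atTop 2] with n hn hn2
  have hn2' : (2:ℝ) ≤ n := by exact_mod_cast hn2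
  have hlog : 0 < Real.log n := Real.log_pos (by linarith)
  set r : ℝ := (n:ℝ) ^ (1 / 64 : ℝ) with hr
  have hr0 : 0 < r := by positivity
  have hrn : r ^ 64 = n := by
    rw [hr, ← Real.rpow_natCast, ← Real.rpow_mul (by positivity)]; norm_num
  rw [Real.norm_of_nonneg hlog.le, Real.norm_of_nonneg hr0.le] at hn
  have hr1 : 1 ≤ r := Real.one_le_rpow (by linarith) (by norm_num)
  have hrle : r ≤ n := by rw [← hrn]; exact le_self_pow₀ hr1 (by norm_num)
  have hl2 : Real.log (n + 1) ≤ 2 * Real.log n := by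
    rw [← Real.log_rpow (by linarith)]
    apply Real.log_le_log (by linarith)
    norm_num; nlinarith
  have hpi := Chebyshev.pi_ge n
  rw [div_le_iff₀ hlog] at hpi
  have h2 := Real.log_two_gt_d9
  have h3 : (n:ℝ) / 8 ≤ Nat.primeCounting n * Real.log n := by nlinarith
  have h4 : (n:ℝ) / 8 ≤ Nat.primeCounting n * (1 / 8 * r) := h3.trans (by gcongr)
  have h5 : r ^ 63 ≤ Nat.primeCounting n := by
    have : r ^ 63 * r ≤ Nat.primeCounting n * r := by
      rw [← pow_succ, hrn]; linarith
    exact le_of_mul_le_mul_right this hr0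
  have h6 := pow_le_pow_left₀ (by positivity) h5 64
  rw [← pow_mul, mul_comm, pow_mul, hrn] at h6
  exact_mod_cast h6

/-- Elementary bookkeeping: the exceptional set has at most `128 K y` elements. -/
lemma count_aux (K k e y n : ℝ) (hK : 1 ≤ K) (he : 0 ≤ e) (hy : 32 * K * 2 ^ 48 ≤ y)
    (hk : y ^ 63 ≤ k) (hn0 : 0 ≤ n) (hn : n ≤ (2 * y) ^ 16)
    (h : k * e ^ 2 ≤ 16 * K * (2 * (y ^ 64 + 1) * e + e ^ 2 * n ^ 3)) :
    e ≤ 128 * K * y := by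
  have hy1 : 1 ≤ y := le_trans (by nlinarith) hy
  have h1 : n ^ 3 ≤ 2 ^ 48 * y ^ 48 := by
    calc n ^ 3 ≤ ((2 * y) ^ 16) ^ 3 := by gcongr
      _ = 2 ^ 48 * y ^ 48 := by ring
  have h2 : 32 * K * n ^ 3 ≤ k := by
    calc 32 * K * n ^ 3 ≤ 32 * K * (2 ^ 48 * y ^ 48) := by gcongr
      _ = (32 * K * 2 ^ 48) * y ^ 48 := by ring
      _ ≤ y * y ^ 48 := by gcongr
      _ = y ^ 49 := by ring
      _ ≤ y ^ 63 := pow_le_pow_right₀ hy1 (by norm_num)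
      _ ≤ k := hk
  have h3 : e ^ 2 * (32 * K * n ^ 3) ≤ e ^ 2 * k := by gcongr
  have h4 : k * e ^ 2 ≤ 64 * K * (y ^ 64 + 1) * e := by nlinarith
  rcases he.eq_or_lt with h0 | h0
  · rw [← h0]; positivity
  have h5 : k * e ≤ 64 * K * (y ^ 64 + 1) := by
    refine le_of_mul_le_mul_right ?_ h0
    calc k * e * e = k * e ^ 2 := by ring
      _ ≤ _ := h4
  have h6 : (1:ℝ) ≤ y ^ 64 := one_le_pow₀ hy1
  have h7 : y ^ 63 * e ≤ y ^ 63 * (128 * K * y) := by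
    calc y ^ 63 * e ≤ k * e := by gcongr
      _ ≤ 64 * K * (y ^ 64 + 1) := h5
      _ ≤ 64 * K * (y ^ 64 + y ^ 64) := by gcongr
      _ = _ := by ring
  exact le_of_mul_le_mul_left h7 (by positivity)

lemma exponent_ge (ε : ℝ) (hε : 0 < ε) :
    (1 / 8 : ℝ) ≤ 1 / (4 * Real.sqrt (Real.exp 1)) + ε := by
  have h1 : Real.sqrt (Real.exp 1) ≤ 2 := by
    rw [Real.sqrt_le_left (by norm_num)]
    have := Real.exp_one_lt_d9
    linarith
  have h2 : 0 < Real.sqrt (Real.exp 1) := Real.sqrt_pos.2 (Real.exp_pos 1)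
  have : (1 / 8 : ℝ) ≤ 1 / (4 * Real.sqrt (Real.exp 1)) :=
    one_div_le_one_div_of_le (by positivity) (by linarith)
  linarith

lemma loglog : ∀ᶠ p : ℕ in atTop, 1 ≤ Real.log (Real.log (Real.log p)) :=
  (Real.tendsto_log_atTop.comp (Real.tendsto_log_atTop.comp
    (Real.tendsto_log_atTop.comp tendsto_natCast_atTop_atTop))).eventually_ge_atTop 1

/-- The property of the theorem, with the constant 256. -/
def Good (ε : ℝ) (p : ℕ) : Prop :=
  ∃ S : Finset ℕ,
    (∀ n ∈ S, 1 ≤ n ∧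
      (n : ℝ) ≤ (p : ℝ) ^ (1 / (4 * Real.sqrt (Real.exp 1)) + ε)) ∧
    (S.card : ℝ) ≤ 256 * Real.log (Real.log (Real.log p)) ^ 2 ∧
    Subgroup.closure {u : (ZMod p)ˣ | ∃ n ∈ S, (u : ZMod p) = (n : ZMod p)} = ⊤

lemma good_of (ε : ℝ) (hε : 0 < ε) (p y : ℕ) (hp : p.Prime) (hy : 2 ≤ y) (hpy : y ^ 8 < p)
    (hl : 1 ≤ Real.log (Real.log (Real.log p))) (P : Finset ℕ)
    (hPdef : ∀ a, a ∈ P ↔ a ≤ y ∧ a.Prime)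
    (hgood : ∀ q : ℕ, q.Prime → q ∣ p - 1 → (cnt P 64 p q : ℝ) * √q < (P.card : ℝ) ^ 64) :
    Good ε p := by
  have := Fact.mk hp
  have hyp : y < p := (Nat.le_self_pow (by norm_num) y).trans_lt hpy
  obtain ⟨S, hSP, hSc, hS⟩ := generate p P 64
    (Finset.card_pos.2 ⟨2, (hPdef 2).2 ⟨hy, Nat.prime_two⟩⟩) hgood (by
      intro a ha
      obtain ⟨h1, h2⟩ := (hPdef a).1 ha
      rw [Ne, ZMod.natCast_eq_zero_iff]
      intro hd
      have := Nat.le_of_dvd h2.pos hd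
      omega)
  refine ⟨S, ?_, ?_, hS⟩
  · intro n hn
    obtain ⟨h1, h2⟩ := (hPdef n).1 (hSP hn)
    refine ⟨h2.one_le, ?_⟩
    have hp1 : (1:ℝ) ≤ p := by exact_mod_cast hp.one_le
    calc (n:ℝ) ≤ y := by exact_mod_cast h1
      _ = ((y:ℝ) ^ 8) ^ (1 / 8 : ℝ) := by
        rw [← Real.rpow_natCast, ← Real.rpow_mul (by positivity)]; norm_num
      _ ≤ (p:ℝ) ^ (1 / 8 : ℝ) := by
        apply Real.rpow_le_rpow (by positivity) _ (by norm_num)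
        exact_mod_cast hpy.le
      _ ≤ _ := Real.rpow_le_rpow_of_exponent_le hp1 (exponent_ge ε hε)
  · have : (S.card : ℝ) ≤ 256 := by exact_mod_cast hSc
    nlinarith

lemma root_aux (y : ℕ) (hy3 : 2 ≤ y) : (2 * y) ^ 16 ≤ y ^ 64 := by
  have h : 2 * y ≤ y ^ 4 := by
    calc 2 * y ≤ y * y := Nat.mul_le_mul_right _ hy3
      _ = y ^ 2 := (pow_two y).symm
      _ ≤ y ^ 4 := Nat.pow_le_pow_right (by omega) (by norm_num)
  have h2 := Nat.pow_le_pow_left h 16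
  rwa [← pow_mul y 4 16] at h2

lemma bad_count (ε : ℝ) (hε : 0 < ε) (c : ℝ) (hc : 0 < c) :
    ∀ᶠ y : ℕ in atTop, ∀ n : ℕ, y ^ 16 ≤ n → n < (y + 1) ^ 16 →
      (((Finset.range (n + 1)).filter (fun p : ℕ => p.Prime ∧ ¬ Good ε p)).card : ℝ) ≤
        c * Nat.primeCounting n := by
  obtain ⟨K, hKdef⟩ : ∃ K : ℝ, K = ((64 : ℕ) : ℝ) ^ 64 := ⟨_, rfl⟩
  have hK : 1 ≤ K := by rw [hKdef]; exact one_le_pow₀ (by norm_num)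
  obtain ⟨n0, hn0⟩ := eventually_atTop.1 pi_lower
  obtain ⟨p0, hp0⟩ := eventually_atTop.1 loglog
  filter_upwards [eventually_ge_atTop n0, eventually_ge_atTop p0, eventually_ge_atTop 2,
    tendsto_natCast_atTop_atTop.eventually_ge_atTop (32 * K * 2 ^ 48),
    tendsto_natCast_atTop_atTop.eventually_ge_atTop ((2 + 128 * K) / c)]
    with y hy1 hy2 hy3 hy4 hy5 n hn1 hn2
  have hyn : y ≤ n := (Nat.le_self_pow (by norm_num) y).trans hn1
  have hy1r : (1:ℝ) ≤ y := by exact_mod_cast (show 1 ≤ y by omega)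
  have hnle : n ≤ (2 * y) ^ 16 := hn2.le.trans (Nat.pow_le_pow_left (by omega) _)
  set P := (Finset.range (y + 1)).filter Nat.Prime with hPd
  have hPdef : ∀ a, a ∈ P ↔ a ≤ y ∧ a.Prime := by
    intro a; simp [hPd]
  have hPc : P.card = Nat.primeCounting y := by
    rw [hPd, Nat.primeCounting, Nat.primeCounting', Nat.count_eq_card_filter_range]
  set E := (Finset.range (n + 1)).filter (fun p : ℕ => (p.Prime ∧ ¬ Good ε p) ∧ y ^ 8 < p)
    with hEd
  have hEc : (E.card : ℝ) ≤ 128 * K * y := by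
    have hmb := main_bound P (fun a ha => ((hPdef a).1 ha).2) 64 y n
      (fun a ha => ((hPdef a).1 ha).1) E (by
        intro p hp
        rw [hEd, Finset.mem_filter, Finset.mem_range] at hp
        exact ⟨hp.2.1.1, Nat.lt_succ_iff.1 hp.1⟩) (by
        exact hnle.trans ((root_aux y hy3).trans (Nat.le_succ _))) (by
        intro p hp
        rw [hEd, Finset.mem_filter, Finset.mem_range] at hp
        by_contra! hcon
        have hyp : y ≤ y ^ 8 := Nat.le_self_pow (by norm_num) y
        have hpp : p0 ≤ p := hy2.trans (hyp.trans hp.2.2.le)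
        exact hp.2.1.2 (good_of ε hε p y hp.2.1.1 hy3 hp.2.2 (hp0 p hpp) P hPdef hcon))
      (Finset.card_pos.2 ⟨2, (hPdef 2).2 ⟨hy3, Nat.prime_two⟩⟩)
    rw [← hKdef] at hmb
    have e1 : (y : ℝ) ^ 63 ≤ (P.card : ℝ) ^ 64 := by
      have := hn0 y hy1
      rw [← hPc] at this
      rw [← Nat.cast_pow, ← Nat.cast_pow]
      exact Nat.cast_le.2 this
    have e2 : (n : ℝ) ≤ (2 * (y : ℝ)) ^ 16 := by
      have : (n : ℝ) ≤ (((2 * y) ^ 16 : ℕ) : ℝ) := Nat.cast_le.2 hnle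
      rwa [Nat.cast_pow, Nat.cast_mul, Nat.cast_ofNat] at this
    rw [Nat.cast_add, Nat.cast_pow, Nat.cast_one] at hmb
    exact count_aux K ((P.card : ℝ) ^ 64) E.card y n hK (Nat.cast_nonneg _) hy4 e1
      (Nat.cast_nonneg _) e2 hmb
  have hsub : (Finset.range (n + 1)).filter (fun p : ℕ => p.Prime ∧ ¬ Good ε p) ⊆
      Finset.range (y ^ 8 + 1) ∪ E := by
    intro p hp
    rw [Finset.mem_filter] at hp
    rw [Finset.mem_union, Finset.mem_range, hEd, Finset.mem_filter]
    by_cases h : y ^ 8 < p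
    · exact Or.inr ⟨hp.1, hp.2, h⟩
    · left; omega
  have hcard := (Finset.card_le_card hsub).trans (Finset.card_union_le _ _)
  rw [Finset.card_range] at hcard
  have hcard' : (((Finset.range (n + 1)).filter (fun p : ℕ => p.Prime ∧ ¬ Good ε p)).card : ℝ) ≤
      y ^ 8 + 1 + E.card := by exact_mod_cast hcard
  have hpi : y ^ 15 ≤ Nat.primeCounting n := by
    have h1 := hn0 n (hy1.trans hyn)
    refine le_of_pow_le_pow_left₀ (n := 64) (by norm_num) (Nat.zero_le _) (le_trans ?_ h1)
    calc (y ^ 15) ^ 64 = y ^ 960 := by rw [← pow_mul]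
      _ ≤ y ^ 1008 := Nat.pow_le_pow_right (by omega) (by norm_num)
      _ = (y ^ 16) ^ 63 := by rw [← pow_mul]
      _ ≤ n ^ 63 := Nat.pow_le_pow_left hn1 _
  have hpi' : (y:ℝ) ^ 15 ≤ Nat.primeCounting n := by exact_mod_cast hpi
  have hy8 : (y:ℝ) ≤ y ^ 8 := le_self_pow₀ hy1r (by norm_num)
  rw [div_le_iff₀ hc] at hy5
  calc _ ≤ (y:ℝ) ^ 8 + 1 + E.card := hcard'
    _ ≤ (y:ℝ) ^ 8 + y ^ 8 + 128 * K * y ^ 8 := by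
      have : 128 * K * (y:ℝ) ≤ 128 * K * y ^ 8 := by gcongr
      linarith
    _ = (2 + 128 * K) * y ^ 8 := by ring
    _ ≤ (y * c) * y ^ 8 := by gcongr
    _ = c * y ^ 9 := by ring
    _ ≤ c * y ^ 15 := by
      have : (y:ℝ) ^ 9 ≤ y ^ 15 := pow_le_pow_right₀ hy1r (by norm_num)
      gcongr
    _ ≤ _ := by gcongr

lemma exists_root (n : ℕ) : ∃ y : ℕ, y ^ 16 ≤ n ∧ n < (y + 1) ^ 16 := by
  induction n with
  | zero => exact ⟨0, by norm_num⟩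
  | succ n ih =>
    obtain ⟨y, h1, h2⟩ := ih
    rcases Nat.lt_or_ge (n + 1) ((y + 1) ^ 16) with h | h
    · exact ⟨y, by omega, h⟩
    · refine ⟨y + 1, h, ?_⟩
      have : (y + 1) ^ 16 < (y + 1 + 1) ^ 16 := Nat.pow_lt_pow_left (by omega) (by norm_num)
      omega

lemma bad_count' (ε : ℝ) (hε : 0 < ε) (c : ℝ) (hc : 0 < c) :
    ∀ᶠ n : ℕ in atTop,
      (((Finset.range (n + 1)).filter (fun p : ℕ => p.Prime ∧ ¬ Good ε p)).card : ℝ) ≤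
        c * Nat.primeCounting n := by
  obtain ⟨Y, hY⟩ := eventually_atTop.1 (bad_count ε hε c hc)
  filter_upwards [eventually_ge_atTop (Y ^ 16)] with n hn
  obtain ⟨y, h1, h2⟩ := exists_root n
  refine hY y ?_ n h1 h2
  have := lt_of_pow_lt_pow_left₀ 16 (Nat.zero_le _) (hn.trans_lt h2)
  omega

end SGS

/-- **Corollary 4.3.** Fix `ε > 0`. There is a constant `C > 0` such that for almost all primes
`p` there is a set `S ⊆ [1, p^{1/(4√e)+ε}]` with `#S ≤ C·(log log log p)²` whose residues
generate `(ZMod p)ˣ`: the number of primes `p ≤ x` for which no such set exists is `o(π(x))`. -/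
theorem almost_all_primes_small_generating_set (ε : ℝ) (hε : 0 < ε) :
    ∃ C : ℝ, 0 < C ∧
      (fun x : ℝ =>
          (((Finset.range (⌊x⌋₊ + 1)).filter (fun p : ℕ => p.Prime ∧
            ¬ ∃ S : Finset ℕ,
              (∀ n ∈ S, 1 ≤ n ∧
                (n : ℝ) ≤ (p : ℝ) ^ (1 / (4 * Real.sqrt (Real.exp 1)) + ε)) ∧
              (S.card : ℝ) ≤ C * Real.log (Real.log (Real.log p)) ^ 2 ∧
              Subgroup.closure {u : (ZMod p)ˣ | ∃ n ∈ S, (u : ZMod p) = (n : ZMod p)} = ⊤)).card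
            : ℝ))
        =o[atTop] fun x : ℝ => (Nat.primeCounting ⌊x⌋₊ : ℝ) := by
  refine ⟨256, by norm_num, ?_⟩
  rw [Asymptotics.isLittleO_iff]
  intro c hc
  filter_upwards [tendsto_nat_floor_atTop.eventually (SGS.bad_count' ε hε c hc)] with x hx
  rw [Real.norm_of_nonneg (Nat.cast_nonneg _), Real.norm_of_nonneg (Nat.cast_nonneg _)]
  exact hx
end

section
/- Let p be an odd prime and let q₁, ..., q_r be the distinct prime divisors of p − 1. Let x₁, ..., x_r be integers coprime to p such that for each i ∈ {1, ..., r}, the residue of x_i in (ZMod p)ˣ is not a q_i-th power. Then there exist integers l₁, ..., l_r such that the element x₁^{l₁} ⋯ x_r^{l_r} of (ZMod p)ˣ is a primitive root modulo p (i.e., generates the cyclic group (ZMod p)ˣ). In particular, the residues of x₁, ..., x_r generate (ZMod p)ˣ. -/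
theorem pow_ne_one_of_not_qth_power {G : Type*} [CommGroup G] [Finite G] [IsCyclic G] (n q : ℕ)
    (hn : Nat.card G = n) (hq : q ∣ n) (u : G) (hu : ¬ ∃ y : G, y ^ q = u) :
    u ^ (n / q) ≠ 1 := by
  intro h
  obtain ⟨g, hg⟩ := IsCyclic.exists_generator (α := G)
  have ho : orderOf g = n := by
    rw [← hn]; exact orderOf_eq_card_of_forall_mem_zpowers hg
  obtain ⟨m, rfl⟩ := (mem_powers_iff_mem_zpowers.mpr (hg u))
  simp only at h hu
  rw [← pow_mul] at h
  have h1 := orderOf_dvd_of_pow_eq_one h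
  rw [ho] at h1
  have hnpos : 0 < n := hn ▸ Nat.card_pos
  obtain ⟨k, rfl⟩ := hq
  have hq0 : 0 < q := Nat.pos_of_mul_pos_right hnpos
  have hk0 : 0 < k := Nat.pos_of_mul_pos_left hnpos
  rw [Nat.mul_div_cancel_left _ hq0] at h1
  obtain ⟨t, rfl⟩ := Nat.dvd_of_mul_dvd_mul_right hk0 h1
  exact hu ⟨g ^ t, by rw [← pow_mul, mul_comm]⟩

/-- **Bezout step of Lemma 1.1.** Let `p` be an odd prime with distinct prime divisors
`q₁, …, q_r` of `p - 1`, and let `x₁, …, x_r` be integers coprime to `p` such that `x_i` is a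
non-`q_i`-th power residue modulo `p` for each `i`. Then there are integers `l₁, …, l_r` such
that `x₁^{l₁} ⋯ x_r^{l_r}` is a primitive root modulo `p`; in particular the residues of
`x₁, …, x_r` generate `(ZMod p)ˣ`. -/
theorem nonresidues_generate (p : ℕ) [hp : Fact p.Prime] (hodd : Odd p)
    (r : ℕ) (q : Fin r → ℕ) (hqinj : Function.Injective q)
    (hq : ∀ i, (q i).Prime ∧ q i ∣ p - 1)
    (hqall : ∀ s : ℕ, s.Prime → s ∣ p - 1 → ∃ i, q i = s)
    (x : Fin r → ℤ) (hxcop : ∀ i, IsCoprime (x i) (p : ℤ))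
    (hxnr : ∀ i, ¬ ∃ y : (ZMod p)ˣ, ((y ^ (q i) : (ZMod p)ˣ) : ZMod p) = (x i : ZMod p)) :
    (∃ l : Fin r → ℤ, ∃ g : (ZMod p)ˣ,
      (g : ZMod p) = ∏ i, (x i : ZMod p) ^ (l i) ∧
      ∀ v : (ZMod p)ˣ, v ∈ Subgroup.zpowers g) ∧
    Subgroup.closure {u : (ZMod p)ˣ | ∃ i, (u : ZMod p) = (x i : ZMod p)} = ⊤ := by
  have hcard : Nat.card (ZMod p)ˣ = p - 1 := by
    rw [Nat.card_eq_fintype_card, ZMod.card_units]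
  have hpow : ∀ u : (ZMod p)ˣ, u ^ (p - 1) = 1 := fun u => by
    rw [← hcard]; exact pow_card_eq_one'
  have hunit : ∀ i, ∃ u : (ZMod p)ˣ, (u : ZMod p) = (x i : ZMod p) := by
    intro i
    have h := (hxcop i).map (Int.castRingHom (ZMod p))
    simp only [eq_intCast, Int.cast_natCast, CharP.cast_eq_zero, isCoprime_zero_right] at h
    exact h
  choose u hu using hunit
  have hunr : ∀ i, u i ^ ((p - 1) / q i) ≠ 1 := by
    intro i
    apply pow_ne_one_of_not_qth_power _ _ hcard (hq i).2
    rintro ⟨y, hy⟩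
    exact hxnr i ⟨y, by rw [hy, hu]⟩
  let l : Fin r → ℕ := fun i => ∏ j ∈ Finset.univ.erase i, q j
  let g : (ZMod p)ˣ := ∏ i, u i ^ l i
  have hp1 : 0 < p - 1 := Nat.sub_pos_of_lt hp.out.one_lt
  have hord : orderOf g = p - 1 := by
    apply orderOf_eq_of_pow_and_pow_div_prime hp1 (hpow g)
    intro s hs hsd
    obtain ⟨k, rfl⟩ := hqall s hs hsd
    have hg : g ^ ((p - 1) / q k) = (u k ^ ((p - 1) / q k)) ^ l k := by
      simp only [g]
      rw [← Finset.prod_pow, Finset.prod_eq_single k]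
      · rw [← pow_mul, ← pow_mul, mul_comm]
      · intro i _ hik
        obtain ⟨t, ht⟩ : q k ∣ l i :=
          Finset.dvd_prod_of_mem q (Finset.mem_erase.mpr ⟨hik.symm, Finset.mem_univ _⟩)
        rw [← pow_mul, ht, mul_right_comm, Nat.mul_div_cancel' hsd, pow_mul, hpow, one_pow]
      · simp
    rw [hg]
    intro h1
    have h2 : (u k ^ ((p - 1) / q k)) ^ q k = 1 := by
      rw [← pow_mul, Nat.div_mul_cancel hsd, hpow]
    have hc : Nat.Coprime (l k) (q k) := by
      apply Nat.Coprime.prod_left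
      intro j hj
      rw [Nat.coprime_primes (hq j).1 hs]
      exact fun h => (Finset.mem_erase.mp hj).1 (hqinj h)
    apply hunr k
    have h3 := Nat.dvd_gcd (orderOf_dvd_of_pow_eq_one h1) (orderOf_dvd_of_pow_eq_one h2)
    rw [hc.gcd_eq_one] at h3
    exact orderOf_eq_one_iff.mp (Nat.dvd_one.mp h3)
  have hgen : ∀ v : (ZMod p)ˣ, v ∈ Subgroup.zpowers g := by
    have : Subgroup.zpowers g = ⊤ := by
      apply Subgroup.eq_top_of_card_eq
      rw [Nat.card_zpowers, hord, hcard]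
    intro v; rw [this]; trivial
  refine ⟨⟨fun i => (l i : ℤ), g, ?_, hgen⟩, ?_⟩
  · simp [g, hu]
  · rw [eq_top_iff]
    intro v _
    refine (Subgroup.zpowers_le.mpr ?_) (hgen v)
    refine Subgroup.prod_mem _ fun i _ => Subgroup.pow_mem _ ?_ _
    apply Subgroup.subset_closure
    exact ⟨i, hu i⟩
end
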